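/- arXiv:1410.1440 — 6 statements merged into one kernel-verified Lean document; each statement's English description precedes it below -/
import Mathlib

section
/- For every integer k ≥ 1 and every real number λ, the infinite product ∏_{j=0}^∞ (1 + λ²/(4(j+k)²)) converges and equals Γ(k)² / (Γ(k + iλ/2) · Γ(k − iλ/2)), where Γ denotes the complex Gamma function; in particular this quotient of Gamma values is a positive real number. -/
/-!
By Euler's limit formula, `Γ(s)` is the limit of `n ^ s * n! / ∏_{j ≤ n} (s + j)`. If
`u + v = z + w`, the factors `n ^ s * n!` cancel in the quotient `Γ(z) Γ(w) / (Γ(u) Γ(v))`, so it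
is the limit of the partial products of `(u + j)(v + j) / ((z + j)(w + j))`. The same relation
cancels the terms linear in `j` in the numerator of
`(u + j)(v + j) / ((z + j)(w + j)) - 1 = (uv - zw) / ((z + j)(w + j))`, whence absolute convergence.
The theorem is the case `u, v = k ± iλ/2` and `z = w = k`, in which `Γ(u)` and `Γ(v)` are complex
conjugates.
-/

open Filter Topology Complex

/-- This includes the poles `s = -m` of `Γ`, where the convention `Γ(-m) = 0` gives `(Γ(-m))⁻¹` the
value `0` of the entire function `1 / Γ`. -/
lemma tendsto_inv_GammaSeq (s : ℂ) :
    Tendsto (fun n => (GammaSeq s n)⁻¹) atTop (𝓝 (Gamma s)⁻¹) := by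
  by_cases hs : ∀ m : ℕ, s ≠ -m
  · exact (GammaSeq_tendsto_Gamma s).inv₀ (Gamma_ne_zero hs)
  · push Not at hs
    obtain ⟨m, rfl⟩ := hs
    rw [Gamma_neg_nat_eq_zero, inv_zero]
    refine tendsto_const_nhds.congr' ?_
    filter_upwards [eventually_ge_atTop m] with n hmn
    have hprod : ∏ j ∈ Finset.range (n + 1), (-(m : ℂ) + j) = 0 :=
      Finset.prod_eq_zero (Finset.mem_range_succ_iff.mpr hmn) (neg_add_cancel _)
    simp [GammaSeq, hprod]

lemma GammaSeq_mul_div_GammaSeq_mul {u v z w : ℂ} (h : u + v = z + w) {n : ℕ} (hn : n ≠ 0) :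
    GammaSeq z n * GammaSeq w n / (GammaSeq u n * GammaSeq v n) =
      ∏ j ∈ Finset.range (n + 1), (u + j) * (v + j) / ((z + j) * (w + j)) := by
  have hpow (a b : ℂ) : (n : ℂ) ^ a * (n : ℂ) ^ b = (n : ℂ) ^ (a + b) :=
    (cpow_add _ _ (Nat.cast_ne_zero.mpr hn)).symm
  have hscale : (n : ℂ) ^ (z + w) * (n.factorial * n.factorial : ℂ) ≠ 0 := by
    simp [cpow_eq_zero_iff, hn, n.factorial_ne_zero]
  simp only [GammaSeq, Finset.prod_div_distrib, Finset.prod_mul_distrib, div_mul_div_comm,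
    mul_mul_mul_comm _ (n.factorial : ℂ), hpow, h]
  rw [div_div_div_cancel_left' _ _ hscale]

lemma summable_inv_add_int_mul_add_int (z w : ℂ) :
    Summable fun j : ℤ => ((z + j) * (w + j))⁻¹ := by
  refine EisensteinSeries.summable_inv_of_isBigO_rpow_inv one_lt_two ?_
  simpa [sq] using (EisensteinSeries.linear_inv_isBigO_right 1 w).mul
    (EisensteinSeries.linear_inv_isBigO_right 1 z)

lemma multipliable_add_nat_mul_div_add_nat_mul {u v z w : ℂ} (h : u + v = z + w)
    (hz : ∀ m : ℕ, z ≠ -m) (hw : ∀ m : ℕ, w ≠ -m) :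
    Multipliable fun j : ℕ => (u + j) * (v + j) / ((z + j) * (w + j)) := by
  have hsum : Summable fun j : ℕ => (u * v - z * w) * ((z + j) * (w + j))⁻¹ := by
    simpa [Function.comp_def] using
      ((summable_inv_add_int_mul_add_int z w).comp_injective Nat.cast_injective).mul_left _
  refine (Complex.multipliable_one_add_of_summable hsum).congr fun j => ?_
  have hzj : z + j ≠ 0 := fun h0 => hz j (eq_neg_of_add_eq_zero_left h0)
  have hwj : w + j ≠ 0 := fun h0 => hw j (eq_neg_of_add_eq_zero_left h0)
  field_simp
  linear_combination (-j : ℂ) * h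

lemma hasProd_add_nat_mul_div_add_nat_mul {u v z w : ℂ} (h : u + v = z + w)
    (hz : ∀ m : ℕ, z ≠ -m) (hw : ∀ m : ℕ, w ≠ -m) :
    HasProd (fun j : ℕ => (u + j) * (v + j) / ((z + j) * (w + j)))
      (Gamma z * Gamma w / (Gamma u * Gamma v)) := by
  rw [(multipliable_add_nat_mul_div_add_nat_mul h hz hw).hasProd_iff_tendsto_nat,
    ← tendsto_add_atTop_iff_nat 1, div_eq_mul_inv, mul_inv]
  refine (((GammaSeq_tendsto_Gamma z).mul (GammaSeq_tendsto_Gamma w)).mul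
    ((tendsto_inv_GammaSeq u).mul (tendsto_inv_GammaSeq v))).congr' ?_
  filter_upwards [eventually_ne_atTop 0] with n hn
  rw [← mul_inv, ← div_eq_mul_inv, GammaSeq_mul_div_GammaSeq_mul h hn]

lemma hasProd_one_sub_sq_div_add_nat_sq {z : ℂ} (hz : ∀ m : ℕ, z ≠ -m) (a : ℂ) :
    HasProd (fun j : ℕ => 1 - a ^ 2 / (z + j) ^ 2)
      (Gamma z ^ 2 / (Gamma (z + a) * Gamma (z - a))) := by
  have hfactor (j : ℕ) :
      (z + a + j) * (z - a + j) / ((z + j) * (z + j)) = 1 - a ^ 2 / (z + j) ^ 2 := by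
    have hzj : z + j ≠ 0 := fun h0 => hz j (eq_neg_of_add_eq_zero_left h0)
    field_simp
    ring
  have hsum : z + a + (z - a) = z + z := by ring
  simpa only [hfactor, ← sq (Gamma z)] using hasProd_add_nat_mul_div_add_nat_mul hsum hz hz

theorem stmt_2_general (x : ℝ) (hx : ∀ m : ℕ, x ≠ -m) (l : ℝ) :
    Multipliable (fun j : ℕ => (1 : ℂ) + (l : ℂ) ^ 2 / (4 * ((j : ℂ) + (x : ℂ)) ^ 2)) ∧
    ∏' j : ℕ, ((1 : ℂ) + (l : ℂ) ^ 2 / (4 * ((j : ℂ) + (x : ℂ)) ^ 2))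
      = Gamma (x : ℂ) ^ 2 / (Gamma ((x : ℂ) + I * l / 2) * Gamma ((x : ℂ) - I * l / 2)) ∧
    ∃ r : ℝ, 0 < r ∧
      Gamma (x : ℂ) ^ 2 / (Gamma ((x : ℂ) + I * l / 2) * Gamma ((x : ℂ) - I * l / 2))
        = (r : ℂ) := by
  have hfactor (j : ℕ) :
      1 - (I * l / 2) ^ 2 / ((x : ℂ) + j) ^ 2 = 1 + (l : ℂ) ^ 2 / (4 * (j + x) ^ 2) := by
    rw [div_pow, mul_pow, I_sq, div_div]
    ring
  have hprod := hasProd_one_sub_sq_div_add_nat_sq (z := x) (mod_cast hx) (I * l / 2)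
  simp only [hfactor] at hprod
  have hconj : (x : ℂ) - I * l / 2 = starRingEnd ℂ (x + I * l / 2) := by
    simp [sub_eq_add_neg, neg_div, conj_ofNat]
  have hne : Gamma (x + I * l / 2) ≠ 0 :=
    Gamma_ne_zero fun m hm => hx m (by simpa using congrArg re hm)
  refine ⟨hprod.multipliable, hprod.tprod_eq,
    Real.Gamma x ^ 2 / normSq (Gamma (x + I * l / 2)),
    div_pos (sq_pos_of_ne_zero (Real.Gamma_ne_zero hx)) (normSq_pos.mpr hne), ?_⟩
  rw [hconj, Gamma_conj, mul_conj, Gamma_ofReal]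
  norm_cast

/-- For `k ≥ 1` and real `λ`, the product `∏_{j=0}^∞ (1 + λ²/(4(j+k)²))` converges and equals
`Γ(k)² / (Γ(k + iλ/2) Γ(k − iλ/2))` for the complex Gamma function; in particular this quotient
of Gamma values is a positive real number. -/
theorem stmt_2 (k : ℕ) (hk : 1 ≤ k) (l : ℝ) :
    Multipliable (fun j : ℕ => (1 : ℂ) + (l : ℂ) ^ 2 / (4 * ((j : ℂ) + (k : ℂ)) ^ 2)) ∧
    ∏' j : ℕ, ((1 : ℂ) + (l : ℂ) ^ 2 / (4 * ((j : ℂ) + (k : ℂ)) ^ 2))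
      = Complex.Gamma (k : ℂ) ^ 2 /
          (Complex.Gamma ((k : ℂ) + Complex.I * l / 2) *
            Complex.Gamma ((k : ℂ) - Complex.I * l / 2)) ∧
    ∃ r : ℝ, 0 < r ∧
      Complex.Gamma (k : ℂ) ^ 2 /
          (Complex.Gamma ((k : ℂ) + Complex.I * l / 2) *
            Complex.Gamma ((k : ℂ) - Complex.I * l / 2)) = (r : ℂ) := by
  have hk' (m : ℕ) : (k : ℝ) ≠ -m :=
    ((neg_nonpos.mpr m.cast_nonneg).trans_lt (Nat.cast_pos.mpr hk)).ne'
  simpa only [ofReal_natCast] using stmt_2_general k hk' l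
end

section
/- For every real number L ≥ 0, (2/π²) · ( ∫_0^1 sin²(πLk)/k dk + ∫_1^∞ sin²(πLk)/k² dk ) ≤ 2 + (2/π²)·log(1 + L), and both integrals are finite. -/
open MeasureTheory

/-!
Since `|sin x| ≤ min |x| 1`, the integrand `sin²(ak)/k` is at most `a²k` for small `k` and at most
`1/k` for large `k`. For `a = πL`, cut `[0, 1]` at `c = 1/(1 + L)`, so that `ac ≤ π`: the two
pieces contribute at most `(ac)²/2 ≤ π²/2` and `log (1/c) = log (1 + L)`. The tail is at most
`∫_1^∞ k⁻² dk = 1 ≤ π²/2`.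
-/

section BoundedNumerator

open Set

variable {f : ℝ → ℝ} {a b C : ℝ}

lemma integral_div_le_mul_log (ha : 0 < a) (hab : a ≤ b) (hf : IntervalIntegrable f volume a b)
    (hC : ∀ x ∈ Icc a b, f x ≤ C) : ∫ x in a..b, f x / x ≤ C * Real.log (b / a) := by
  have inv_cont : ContinuousOn (fun x : ℝ ↦ x⁻¹) (uIcc a b) :=
    continuousOn_inv₀.mono fun x hx ↦ (ha.trans_le (uIcc_of_le hab ▸ hx).1).ne'
  calc ∫ x in a..b, f x / x
      ≤ ∫ x in a..b, C * x⁻¹ := by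
        refine intervalIntegral.integral_mono_on hab (hf.mul_continuousOn inv_cont)
          (inv_cont.intervalIntegrable.const_mul C) fun x hx ↦ ?_
        exact mul_le_mul_of_nonneg_right (hC x hx) (inv_nonneg.2 (ha.le.trans hx.1))
    _ = C * Real.log (b / a) := by
        rw [intervalIntegral.integral_const_mul, integral_inv_of_pos ha (ha.trans_le hab)]

lemma integrableOn_Ioi_inv_sq (ha : 0 < a) : IntegrableOn (fun x : ℝ ↦ (x ^ 2)⁻¹) (Ioi a) := by
  simpa only [Real.rpow_neg_ofNat, Int.reduceNeg, zpow_neg, zpow_ofNat] using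
    integrableOn_Ioi_rpow_of_lt (a := -2) (by norm_num) ha

lemma integral_Ioi_inv_sq (ha : 0 < a) : ∫ x in Ioi a, (x ^ 2)⁻¹ = a⁻¹ := by
  calc ∫ x in Ioi a, (x ^ 2)⁻¹
      = -a ^ (-2 + 1 : ℝ) / (-2 + 1) := by
        simpa only [Real.rpow_neg_ofNat, Int.reduceNeg, zpow_neg, zpow_ofNat] using
          integral_Ioi_rpow_of_lt (a := -2) (by norm_num) ha
    _ = a⁻¹ := by norm_num [Real.rpow_neg_one]

lemma integrableOn_Ioi_div_sq (ha : 0 < a) (hf : AEStronglyMeasurable f (volume.restrict (Ioi a)))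
    (hC : ∀ x ∈ Ioi a, |f x| ≤ C) : IntegrableOn (fun x ↦ f x / x ^ 2) (Ioi a) :=
  (integrableOn_Ioi_inv_sq ha).bdd_mul hf (ae_restrict_of_forall_mem measurableSet_Ioi hC)

lemma integral_Ioi_div_sq_le (ha : 0 < a) (hf : AEStronglyMeasurable f (volume.restrict (Ioi a)))
    (hC : ∀ x ∈ Ioi a, |f x| ≤ C) : ∫ x in Ioi a, f x / x ^ 2 ≤ C / a := by
  calc ∫ x in Ioi a, f x / x ^ 2
      ≤ ∫ x in Ioi a, C * (x ^ 2)⁻¹ := by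
        refine setIntegral_mono_on (integrableOn_Ioi_div_sq ha hf hC)
          ((integrableOn_Ioi_inv_sq ha).const_mul C) measurableSet_Ioi fun x hx ↦ ?_
        exact mul_le_mul_of_nonneg_right ((le_abs_self _).trans (hC x hx)) (by positivity)
    _ = C / a := by rw [integral_const_mul, integral_Ioi_inv_sq ha, div_eq_mul_inv]

end BoundedNumerator

section SinSq

open Real

lemma continuous_sin_mul_sq_div (a : ℝ) : Continuous fun x ↦ sin (a * x) ^ 2 / x := by
  have eq_sinc : (fun x ↦ sin (a * x) ^ 2 / x) = fun x ↦ a * sin (a * x) * sinc (a * x) := by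
    ext x
    by_cases hax : a * x = 0
    · simp [hax]
    · have hx : x ≠ 0 := right_ne_zero_of_mul hax
      have ha : a ≠ 0 := left_ne_zero_of_mul hax
      rw [sinc_of_ne_zero hax]
      field_simp
  rw [eq_sinc]
  fun_prop

lemma sin_mul_sq_div_le (a : ℝ) {x : ℝ} (hx : 0 ≤ x) : sin (a * x) ^ 2 / x ≤ a ^ 2 * x := by
  refine div_le_of_le_mul₀ hx (by positivity) ?_
  calc sin (a * x) ^ 2 ≤ (a * x) ^ 2 := sin_sq_le_sq
    _ = a ^ 2 * x * x := by ring

lemma integral_sin_mul_sq_div_le_sq (a : ℝ) {c : ℝ} (hc : 0 ≤ c) :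
    ∫ x in 0..c, sin (a * x) ^ 2 / x ≤ (a * c) ^ 2 / 2 := by
  calc ∫ x in 0..c, sin (a * x) ^ 2 / x
      ≤ ∫ x in 0..c, a ^ 2 * x :=
        intervalIntegral.integral_mono_on hc ((continuous_sin_mul_sq_div a).intervalIntegrable 0 c)
          ((continuous_const_mul (a ^ 2)).intervalIntegrable 0 c)
          fun _ hx ↦ sin_mul_sq_div_le a hx.1
    _ = (a * c) ^ 2 / 2 := by
        rw [intervalIntegral.integral_const_mul, integral_id]
        ring

lemma integral_sin_mul_sq_div_le_sq_add_log (a : ℝ) {b c : ℝ} (hc : 0 < c) (hcb : c ≤ b) :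
    ∫ x in 0..b, sin (a * x) ^ 2 / x ≤ (a * c) ^ 2 / 2 + log (b / c) := by
  have integrable := (continuous_sin_mul_sq_div a).intervalIntegrable (μ := volume)
  have far_le : ∫ x in c..b, sin (a * x) ^ 2 / x ≤ 1 * log (b / c) :=
    integral_div_le_mul_log hc hcb (Continuous.intervalIntegrable (by fun_prop) c b)
      fun _ _ ↦ sin_sq_le_one _
  rw [← intervalIntegral.integral_add_adjacent_intervals (integrable 0 c) (integrable c b)]
  linarith [integral_sin_mul_sq_div_le_sq a hc.le]

lemma integral_sin_mul_sq_div_le_add_log_one_add (a : ℝ) {L : ℝ} (hL : 0 ≤ L) :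
    ∫ k in 0..1, sin (a * L * k) ^ 2 / k ≤ a ^ 2 / 2 + log (1 + L) := by
  have ratio_le : (L / (1 + L)) ^ 2 ≤ 1 :=
    pow_le_one₀ (by positivity) (div_le_one_of_le₀ (by linarith) (by positivity))
  calc ∫ k in 0..1, sin (a * L * k) ^ 2 / k
      ≤ (a * L * (1 + L)⁻¹) ^ 2 / 2 + log (1 / (1 + L)⁻¹) :=
        integral_sin_mul_sq_div_le_sq_add_log (a * L) (by positivity)
          (inv_le_one_of_one_le₀ (by linarith))
    _ = a ^ 2 * (L / (1 + L)) ^ 2 / 2 + log (1 + L) := by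
        rw [one_div, inv_inv]
        ring
    _ ≤ a ^ 2 * 1 / 2 + log (1 + L) := by gcongr
    _ = a ^ 2 / 2 + log (1 + L) := by rw [mul_one]

end SinSq

/-- For every `L ≥ 0`, both integrals `∫_0^1 sin²(πLk)/k dk` and `∫_1^∞ sin²(πLk)/k² dk` are
finite, and `(2/π²)(∫_0^1 sin²(πLk)/k dk + ∫_1^∞ sin²(πLk)/k² dk) ≤ 2 + (2/π²) log(1+L)`. -/
theorem stmt_4 (L : ℝ) (hL : 0 ≤ L) :
    IntegrableOn (fun k : ℝ => Real.sin (Real.pi * L * k) ^ 2 / k) (Set.Ioc 0 1) ∧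
    IntegrableOn (fun k : ℝ => Real.sin (Real.pi * L * k) ^ 2 / k ^ 2) (Set.Ioi 1) ∧
    (2 / Real.pi ^ 2) *
        ((∫ k in Set.Ioc (0 : ℝ) 1, Real.sin (Real.pi * L * k) ^ 2 / k) +
          ∫ k in Set.Ioi (1 : ℝ), Real.sin (Real.pi * L * k) ^ 2 / k ^ 2)
      ≤ 2 + (2 / Real.pi ^ 2) * Real.log (1 + L) := by
  have sin_sq_meas : AEStronglyMeasurable (fun k ↦ Real.sin (Real.pi * L * k) ^ 2)
      (volume.restrict (Set.Ioi 1)) := Continuous.aestronglyMeasurable (by fun_prop)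
  have sin_sq_le : ∀ k ∈ Set.Ioi (1 : ℝ), |Real.sin (Real.pi * L * k) ^ 2| ≤ 1 := fun k _ ↦ by
    rw [abs_sq]
    exact Real.sin_sq_le_one _
  refine ⟨(continuous_sin_mul_sq_div _).integrableOn_Ioc,
    integrableOn_Ioi_div_sq one_pos sin_sq_meas sin_sq_le, ?_⟩
  have head_le := integral_sin_mul_sq_div_le_add_log_one_add Real.pi hL
  rw [intervalIntegral.integral_of_le zero_le_one] at head_le
  have tail_le := integral_Ioi_div_sq_le one_pos sin_sq_meas sin_sq_le
  have one_le : 1 / 1 ≤ Real.pi ^ 2 / 2 := by nlinarith [Real.pi_gt_three]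
  calc _ ≤ 2 / Real.pi ^ 2 * (Real.pi ^ 2 / 2 + Real.log (1 + L) + 1 / 1) := by
        gcongr
    _ ≤ 2 / Real.pi ^ 2 * (Real.pi ^ 2 / 2 + Real.log (1 + L) + Real.pi ^ 2 / 2) := by
        gcongr
    _ = 2 + 2 / Real.pi ^ 2 * Real.log (1 + L) := by
        field_simp
        ring
end

section
/- Let (Ω, 𝔉, P) be a probability space, let Y : Ω → [0, ∞) be a nonnegative random variable, and let v > 0 be such that P(Y ≥ t) ≤ exp( −min( t²/(4v), t/2 ) ) for all t ≥ 0. Then for every q with 0 ≤ q < 1/2, E[e^{qY}] ≤ 1/(1 − 2q) + q·√(4πv)·e^{4q²v}. -/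
open MeasureTheory

/-!
By the layer-cake formula, `E[e^{qY}] ≤ 1 + q ∫₀^∞ P(Y ≥ t) e^{qt} dt`. With `s = 2`, the tail is
at most `e^{-t/s} + e^{-t²/(4v)}`. The exponential summand contributes `qs / (1 - sq)`, which
together with the leading `1` is `1 / (1 - sq)`; the Gaussian summand, after completing the square
and extending the integral to all of `ℝ`, contributes at most `q √(4πv) e^{q²v}`.
-/

section

open Real Set

lemma intervalIntegral_mul_exp_mul (q a b : ℝ) :
    ∫ t in a..b, q * exp (q * t) = exp (q * b) - exp (q * a) := by
  rw [intervalIntegral.integral_const_mul, intervalIntegral.mul_integral_comp_mul_left,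
    integral_exp]

lemma exp_neg_min_le_add (x y : ℝ) : exp (-min x y) ≤ exp (-x) + exp (-y) := by
  rw [← max_neg_neg, exp_monotone.map_max]
  exact max_le_add_of_nonneg (exp_pos _).le (exp_pos _).le

lemma lintegral_exp_mul_Ioi {a : ℝ} (ha : a < 0) (c : ℝ) :
    ∫⁻ t in Ioi c, ENNReal.ofReal (exp (a * t)) = ENNReal.ofReal (-exp (a * c) / a) := by
  rw [← ofReal_integral_eq_lintegral_ofReal (integrableOn_exp_mul_Ioi ha c)
    (ae_of_all _ fun t ↦ (exp_pos _).le), integral_exp_mul_Ioi ha]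

lemma lintegral_exp_mul_sub_sq_div {v : ℝ} (hv : 0 < v) (q : ℝ) :
    ∫⁻ t, ENNReal.ofReal (exp (q * t - t ^ 2 / (4 * v)))
      = ENNReal.ofReal (√(4 * π * v) * exp (q ^ 2 * v)) := by
  have complete_square (t : ℝ) : exp (q * t - t ^ 2 / (4 * v))
      = exp (-(1 / (4 * v)) * (t - 2 * q * v) ^ 2) * exp (q ^ 2 * v) := by
    rw [← exp_add]
    congr 1
    field_simp
    ring
  have integrable_shifted : Integrable fun t : ℝ ↦
      exp (-(1 / (4 * v)) * (t - 2 * q * v) ^ 2) * exp (q ^ 2 * v) :=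
    ((integrable_exp_neg_mul_sq (by positivity)).comp_sub_right _).mul_const _
  simp_rw [complete_square]
  rw [← ofReal_integral_eq_lintegral_ofReal integrable_shifted
      (ae_of_all _ fun t ↦ by positivity),
    integral_mul_const, integral_sub_right_eq_self fun t : ℝ ↦ exp (-(1 / (4 * v)) * t ^ 2),
    integral_gaussian]
  congr 3
  field_simp

lemma lintegral_exp_neg_min_mul_exp_mul_le {v s q : ℝ} (hv : 0 < v) (hs : 0 < s)
    (hsq : s * q < 1) :
    ∫⁻ t in Ioi 0, ENNReal.ofReal (exp (-min (t ^ 2 / (4 * v)) (t / s)) * exp (q * t))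
      ≤ ENNReal.ofReal (s / (1 - s * q) + √(4 * π * v) * exp (q ^ 2 * v)) := by
  have hden : 0 < 1 - s * q := by linarith
  have hrate : q - 1 / s = -((1 - s * q) / s) := by
    field_simp
    ring
  have exponential_part : ∫⁻ t in Ioi 0, ENNReal.ofReal (exp ((q - 1 / s) * t))
      = ENNReal.ofReal (s / (1 - s * q)) := by
    rw [lintegral_exp_mul_Ioi (by rw [hrate]; exact neg_neg_of_pos (div_pos hden hs)), hrate,
      mul_zero, exp_zero, neg_div_neg_eq, one_div_div]
  have pointwise (t : ℝ) : exp (-min (t ^ 2 / (4 * v)) (t / s)) * exp (q * t)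
      ≤ exp ((q - 1 / s) * t) + exp (q * t - t ^ 2 / (4 * v)) :=
    calc exp (-min (t ^ 2 / (4 * v)) (t / s)) * exp (q * t)
      _ ≤ (exp (-(t ^ 2 / (4 * v))) + exp (-(t / s))) * exp (q * t) := by
        gcongr
        exact exp_neg_min_le_add _ _
      _ = exp ((q - 1 / s) * t) + exp (q * t - t ^ 2 / (4 * v)) := by
        rw [add_mul, ← exp_add, ← exp_add, add_comm]
        ring_nf
  calc ∫⁻ t in Ioi 0, ENNReal.ofReal (exp (-min (t ^ 2 / (4 * v)) (t / s)) * exp (q * t))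
    _ ≤ ∫⁻ t in Ioi 0, (ENNReal.ofReal (exp ((q - 1 / s) * t))
          + ENNReal.ofReal (exp (q * t - t ^ 2 / (4 * v)))) :=
      lintegral_mono fun t ↦ (ENNReal.ofReal_le_ofReal (pointwise t)).trans ENNReal.ofReal_add_le
    _ ≤ ENNReal.ofReal (s / (1 - s * q))
          + ENNReal.ofReal (√(4 * π * v) * exp (q ^ 2 * v)) := by
      rw [lintegral_add_left (by fun_prop), exponential_part, ← lintegral_exp_mul_sub_sq_div hv]
      gcongr
      exact Measure.restrict_le_self
    _ = ENNReal.ofReal (s / (1 - s * q) + √(4 * π * v) * exp (q ^ 2 * v)) :=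
      (ENNReal.ofReal_add (by positivity) (by positivity)).symm

variable {Ω : Type*} [MeasurableSpace Ω] {Y : Ω → ℝ} {q : ℝ}

lemma lintegral_exp_mul_sub_one_eq_lintegral_meas_le {μ : Measure Ω} (hY : AEMeasurable Y μ)
    (hY0 : 0 ≤ᵐ[μ] Y) (hq : 0 ≤ q) :
    ∫⁻ ω, ENNReal.ofReal (exp (q * Y ω) - 1) ∂μ
      = ENNReal.ofReal q * ∫⁻ t in Ioi 0, μ {ω | t ≤ Y ω} * ENNReal.ofReal (exp (q * t)) := by
  have hcont : Continuous fun t ↦ q * exp (q * t) := by fun_prop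
  have layer_cake := lintegral_comp_eq_lintegral_meas_le_mul μ hY0 hY
    (fun t _ ↦ hcont.intervalIntegrable 0 t) (ae_of_all _ fun t ↦ by positivity)
  simp_rw [intervalIntegral_mul_exp_mul, mul_zero, exp_zero, ENNReal.ofReal_mul hq,
    mul_left_comm _ (ENNReal.ofReal q)] at layer_cake
  rwa [lintegral_const_mul' _ _ ENNReal.ofReal_ne_top] at layer_cake

lemma lintegral_exp_mul_le_measure_univ_add {μ : Measure Ω} (hY : AEMeasurable Y μ)
    (hq : 0 ≤ q) :
    ∫⁻ ω, ENNReal.ofReal (exp (q * Y ω)) ∂μ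
      ≤ μ univ + ENNReal.ofReal q *
          ∫⁻ t in Ioi 0, μ {ω | t ≤ Y ω} * ENNReal.ofReal (exp (q * t)) := by
  have hpos : ∀ ω, 0 ≤ max (Y ω) 0 := fun ω ↦ le_max_right _ _
  have pointwise (ω : Ω) : ENNReal.ofReal (exp (q * Y ω))
      ≤ 1 + ENNReal.ofReal (exp (q * max (Y ω) 0) - 1) := by
    rw [← ENNReal.ofReal_one,
      ← ENNReal.ofReal_add zero_le_one (sub_nonneg.2 (one_le_exp (mul_nonneg hq (hpos ω)))),
      add_sub_cancel]
    gcongr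
    exact le_max_left _ _
  have tail_max : ∀ t ∈ Ioi (0 : ℝ), {ω | t ≤ max (Y ω) 0} = {ω | t ≤ Y ω} := by
    intro t (ht : 0 < t)
    simp only [le_max_iff, ht.not_ge, or_false]
  calc ∫⁻ ω, ENNReal.ofReal (exp (q * Y ω)) ∂μ
    _ ≤ ∫⁻ ω, (1 + ENNReal.ofReal (exp (q * max (Y ω) 0) - 1)) ∂μ := lintegral_mono pointwise
    _ = μ univ + ENNReal.ofReal q *
          ∫⁻ t in Ioi 0, μ {ω | t ≤ max (Y ω) 0} * ENNReal.ofReal (exp (q * t)) := by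
      rw [lintegral_add_left measurable_const, lintegral_one,
        lintegral_exp_mul_sub_one_eq_lintegral_meas_le (hY.max aemeasurable_const)
          (ae_of_all _ hpos) hq]
    _ = μ univ + ENNReal.ofReal q *
          ∫⁻ t in Ioi 0, μ {ω | t ≤ Y ω} * ENNReal.ofReal (exp (q * t)) := by
      rw [setLIntegral_congr_fun measurableSet_Ioi fun t ht ↦ by rw [tail_max t ht]]

theorem stmt_5_general {P : Measure Ω} [IsProbabilityMeasure P] (hY : AEMeasurable Y P)
    {v s : ℝ} (hv : 0 < v) (hs : 0 < s)
    (htail : ∀ t : ℝ, 0 < t →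
      P {ω | t ≤ Y ω} ≤ ENNReal.ofReal (exp (-min (t ^ 2 / (4 * v)) (t / s))))
    (hq : 0 ≤ q) (hsq : s * q < 1) :
    ∫⁻ ω, ENNReal.ofReal (exp (q * Y ω)) ∂P
      ≤ ENNReal.ofReal (1 / (1 - s * q) + q * √(4 * π * v) * exp (q ^ 2 * v)) := by
  have hden : 0 < 1 - s * q := by linarith
  calc ∫⁻ ω, ENNReal.ofReal (exp (q * Y ω)) ∂P
    _ ≤ 1 + ENNReal.ofReal q *
          ∫⁻ t in Ioi 0, P {ω | t ≤ Y ω} * ENNReal.ofReal (exp (q * t)) :=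
      (lintegral_exp_mul_le_measure_univ_add hY hq).trans_eq (by rw [measure_univ])
    _ ≤ 1 + ENNReal.ofReal q * ∫⁻ t in Ioi 0,
          ENNReal.ofReal (exp (-min (t ^ 2 / (4 * v)) (t / s)) * exp (q * t)) := by
      gcongr 1 + _ * ?_
      refine setLIntegral_mono' measurableSet_Ioi fun t ht ↦ ?_
      rw [ENNReal.ofReal_mul (exp_pos _).le]
      gcongr
      exact htail t ht
    _ ≤ 1 + ENNReal.ofReal q *
          ENNReal.ofReal (s / (1 - s * q) + √(4 * π * v) * exp (q ^ 2 * v)) := by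
      gcongr
      exact lintegral_exp_neg_min_mul_exp_mul_le hv hs hsq
    _ = ENNReal.ofReal (1 + q * (s / (1 - s * q) + √(4 * π * v) * exp (q ^ 2 * v))) := by
      rw [← ENNReal.ofReal_mul hq, ← ENNReal.ofReal_one,
        ← ENNReal.ofReal_add zero_le_one (by positivity)]
    _ = ENNReal.ofReal (1 / (1 - s * q) + q * √(4 * π * v) * exp (q ^ 2 * v)) := by
      have absorb_one : 1 + q * (s / (1 - s * q)) = 1 / (1 - s * q) := by
        rw [eq_div_iff hden.ne', add_mul, mul_assoc, div_mul_cancel₀ _ hden.ne']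
        ring
      rw [mul_add, ← add_assoc, absorb_one, mul_assoc q]

end

/-- If a nonnegative random variable `Y` on a probability space satisfies the Bernstein-type tail
bound `P(Y ≥ t) ≤ exp(−min(t²/(4v), t/2))` for all `t ≥ 0`, then for every `0 ≤ q < 1/2`,
`E[e^{qY}] ≤ 1/(1 − 2q) + q √(4πv) e^{4q²v}`. -/
theorem stmt_5 {Ω : Type*} [MeasurableSpace Ω] (P : Measure Ω) [IsProbabilityMeasure P]
    (Y : Ω → ℝ) (hY : Measurable Y) (hY0 : ∀ ω, 0 ≤ Y ω) (v : ℝ) (hv : 0 < v)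
    (htail : ∀ t : ℝ, 0 ≤ t →
      P {ω | t ≤ Y ω} ≤ ENNReal.ofReal (Real.exp (-(min (t ^ 2 / (4 * v)) (t / 2)))))
    (q : ℝ) (hq0 : 0 ≤ q) (hq : q < 1 / 2) :
    ∫⁻ ω, ENNReal.ofReal (Real.exp (q * Y ω)) ∂P
      ≤ ENNReal.ofReal
          (1 / (1 - 2 * q) + q * Real.sqrt (4 * Real.pi * v) * Real.exp (4 * q ^ 2 * v)) := by
  refine (stmt_5_general hY.aemeasurable hv two_pos (fun t ht ↦ htail t ht.le) hq0
    (by linarith)).trans ?_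
  gcongr
  exact le_mul_of_one_le_left (sq_nonneg q) (by norm_num)
end

section
/- Let C > 0 and let y : ℤ → ℝ be a sequence with y_k ≠ 0 for all k ∈ ℤ and |y_k − k| ≤ C·log(2 + |k|) for all k ∈ ℤ, and let ξ(z) = e^{iπz}·(1 − z/y_0)·∏_{k=1}^∞ [(1 − z/y_k)(1 − z/y_{−k})] be the associated entire function (the product converges absolutely and locally uniformly). Then for every z ∈ ℂ not belonging to {y_k : k ∈ ℤ}, the series 1/(z − y_0) + Σ_{k=1}^∞ [ 1/(z − y_k) + 1/(z − y_{−k}) ] converges and ξ′(z)/ξ(z) = iπ + 1/(z − y_0) + Σ_{k=1}^∞ [ 1/(z − y_k) + 1/(z − y_{−k}) ]. -/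
/-!
Pairing the factors at `y_k` and `y_{-k}` gives
`(1 - w/y_k)(1 - w/y_{-k}) = 1 + (w² / (y_k y_{-k}) - w (1/y_k + 1/y_{-k}))`,
so as soon as `∑ 1/(y_k y_{-k})` and `∑ (1/y_k + 1/y_{-k})` converge absolutely, the product
converges uniformly on every disc and can be differentiated logarithmically term by term. If
`y_k - k = O(|k| ^ r)` with `r < 1`, then `1/(y_k y_{-k}) = O(|k| ^ (-2))` and
`1/y_k - 1/k = O(|k| ^ (r - 2))`; the second estimate suffices because `1/k + 1/(-k) = 0`.
-/

open Filter Topology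

/-- The entire function `ξ(z) = e^{iπz} (1 − z/y₀) ∏_{k≥1} (1 − z/y_k)(1 − z/y_{−k})` associated
to a sequence `y : ℤ → ℝ`. -/
noncomputable def xiFun (y : ℤ → ℝ) : ℂ → ℂ := fun z =>
  Complex.exp (Real.pi * Complex.I * z) * (1 - z / (y 0 : ℂ)) *
    ∏' k : ℕ, ((1 - z / (y ((k : ℤ) + 1) : ℂ)) * (1 - z / (y (-((k : ℤ) + 1)) : ℂ)))

section LogDerivProduct

theorem summable_div_one_add {ι K : Type*} [NormedField K] [CompleteSpace K] {f g : ι → K}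
    (hf : Summable f) (hg : Summable (‖g ·‖)) : Summable fun i ↦ g i / (1 + f i) := by
  have hlim : Tendsto (fun i ↦ (1 + f i)⁻¹) cofinite (𝓝 1) := by
    simpa using (hf.tendsto_cofinite_zero.const_add 1).inv₀ (by simp)
  simpa only [div_eq_mul_inv] using hg.mul_tendsto_const hlim

variable {ι : Type*} {U : Set ℂ} {f : ι → ℂ → ℂ} {u : ι → ℝ} {z : ℂ}

theorem differentiableOn_tprod_one_add (hU : IsOpen U) (hu : Summable u)
    (hf : ∀ i, DifferentiableOn ℂ (f i) U) (hfu : ∀ i, ∀ w ∈ U, ‖f i w‖ ≤ u i) :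
    DifferentiableOn ℂ (fun w ↦ ∏' i, (1 + f i w)) U :=
  (hu.hasProdLocallyUniformlyOn_one_add hU (.of_forall hfu)
    fun i ↦ (hf i).continuousOn).differentiableOn (.of_forall fun _ ↦ by fun_prop) hU

theorem hasSum_logDeriv_tprod_one_add (hU : IsOpen U) (hu : Summable u)
    (hf : ∀ i, DifferentiableOn ℂ (f i) U) (hfu : ∀ i, ∀ w ∈ U, ‖f i w‖ ≤ u i) (hz : z ∈ U)
    (hne : ∀ i, 1 + f i z ≠ 0) :
    HasSum (fun i ↦ logDeriv (fun w ↦ 1 + f i w) z)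
      (logDeriv (fun w ↦ ∏' i, (1 + f i w)) z) := by
  have hval : Summable fun i ↦ ‖f i z‖ := hu.of_nonneg_of_le (fun _ ↦ norm_nonneg _) (hfu · z hz)
  have hderiv : Summable fun i ↦ deriv (f i) z :=
    (Complex.hasSum_deriv_of_summable_norm hu hf hU hfu hz).summable
  have hlog : Summable fun i ↦ logDeriv (fun w ↦ 1 + f i w) z := by
    simp only [logDeriv_apply, deriv_const_add]
    exact summable_div_one_add hval.of_norm hderiv.norm
  rw [logDeriv_tprod_eq_tsum hU hz hne (fun i ↦ (hf i).const_add 1) hlog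
    (hu.multipliableLocallyUniformlyOn_one_add hU (.of_forall hfu) fun i ↦ (hf i).continuousOn)
    (tprod_one_add_ne_zero_of_summable hne hval)]
  exact hlog.hasSum

end LogDerivProduct

section LinearFactors

variable {K : Type*}

theorem one_sub_div_ne_zero [DivisionRing K] {a z : K} (hz : z ≠ a) : 1 - z / a ≠ 0 := by
  rcases eq_or_ne a 0 with rfl | ha
  · simp
  · rwa [sub_ne_zero, ne_comm, Ne, div_eq_one_iff_eq ha]

theorem one_sub_div_mul_one_sub_div [Field K] (a b w : K) :
    (1 - w / a) * (1 - w / b) = 1 + (w ^ 2 * (a * b)⁻¹ - w * (a⁻¹ + b⁻¹)) := by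
  ring

variable [NontriviallyNormedField K]

theorem logDeriv_one_sub_div {a : K} (ha : a ≠ 0) (z : K) :
    logDeriv (fun w ↦ 1 - w / a) z = 1 / (z - a) := by
  have hderiv : deriv (fun w ↦ 1 - w / a) z = -a⁻¹ := by simp
  rw [logDeriv_apply, hderiv, one_sub_div ha, div_div_eq_mul_div, neg_mul, inv_mul_cancel₀ ha,
    ← neg_sub z a, neg_div_neg_eq]

theorem logDeriv_one_sub_div_mul_one_sub_div {a b z : K} (ha : a ≠ 0) (hb : b ≠ 0) (hza : z ≠ a)
    (hzb : z ≠ b) :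
    logDeriv (fun w ↦ (1 - w / a) * (1 - w / b)) z = 1 / (z - a) + 1 / (z - b) := by
  rw [logDeriv_mul (f := fun w ↦ 1 - w / a) (g := fun w ↦ 1 - w / b) z (one_sub_div_ne_zero hza)
    (one_sub_div_ne_zero hzb) (by fun_prop) (by fun_prop), logDeriv_one_sub_div ha,
    logDeriv_one_sub_div hb]

end LinearFactors

section PairedProduct

variable {ι : Type*} {a b : ι → ℂ} {z : ℂ}

theorem norm_sq_mul_sub_mul_le {K : Type*} [NormedDivisionRing K] {p s w : K} {R : ℝ}
    (hw : ‖w‖ ≤ R) :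
    ‖w ^ 2 * p - w * s‖ ≤ R ^ 2 * ‖p‖ + R * ‖s‖ := by
  refine (norm_sub_le _ _).trans ?_
  rw [norm_mul, norm_mul, norm_pow]
  gcongr

theorem differentiable_tprod_one_sub_div_mul_one_sub_div (hp : Summable fun i ↦ (a i * b i)⁻¹)
    (hs : Summable fun i ↦ (a i)⁻¹ + (b i)⁻¹) :
    Differentiable ℂ fun w ↦ ∏' i, ((1 - w / a i) * (1 - w / b i)) := by
  intro z
  have hball : z ∈ Metric.ball (0 : ℂ) (‖z‖ + 1) := by simp
  simp only [one_sub_div_mul_one_sub_div]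
  exact (differentiableOn_tprod_one_add Metric.isOpen_ball
    ((hp.norm.mul_left ((‖z‖ + 1) ^ 2)).add (hs.norm.mul_left (‖z‖ + 1))) (fun i ↦ by fun_prop)
    fun i w hw ↦ norm_sq_mul_sub_mul_le (mem_ball_zero_iff.1 hw).le).differentiableAt
      (Metric.isOpen_ball.mem_nhds hball)

theorem tprod_one_sub_div_mul_one_sub_div_ne_zero (hp : Summable fun i ↦ (a i * b i)⁻¹)
    (hs : Summable fun i ↦ (a i)⁻¹ + (b i)⁻¹) (hza : ∀ i, z ≠ a i) (hzb : ∀ i, z ≠ b i) :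
    ∏' i, ((1 - z / a i) * (1 - z / b i)) ≠ 0 := by
  have hne (i) := mul_ne_zero (one_sub_div_ne_zero (hza i)) (one_sub_div_ne_zero (hzb i))
  simp only [one_sub_div_mul_one_sub_div] at hne ⊢
  exact tprod_one_add_ne_zero_of_summable hne ((hp.mul_left _).sub (hs.mul_left _)).norm

theorem hasSum_logDeriv_tprod_one_sub_div_mul_one_sub_div (ha : ∀ i, a i ≠ 0) (hb : ∀ i, b i ≠ 0)
    (hp : Summable fun i ↦ (a i * b i)⁻¹) (hs : Summable fun i ↦ (a i)⁻¹ + (b i)⁻¹)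
    (hza : ∀ i, z ≠ a i) (hzb : ∀ i, z ≠ b i) :
    HasSum (fun i ↦ 1 / (z - a i) + 1 / (z - b i))
      (logDeriv (fun w ↦ ∏' i, ((1 - w / a i) * (1 - w / b i))) z) := by
  have hball : z ∈ Metric.ball (0 : ℂ) (‖z‖ + 1) := by simp
  have hne (i) := mul_ne_zero (one_sub_div_ne_zero (hza i)) (one_sub_div_ne_zero (hzb i))
  simp only [← fun i ↦ logDeriv_one_sub_div_mul_one_sub_div (ha i) (hb i) (hza i) (hzb i)]
  simp only [one_sub_div_mul_one_sub_div] at hne ⊢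
  exact hasSum_logDeriv_tprod_one_add Metric.isOpen_ball
    ((hp.norm.mul_left ((‖z‖ + 1) ^ 2)).add (hs.norm.mul_left (‖z‖ + 1))) (fun i ↦ by fun_prop)
    (fun i w hw ↦ norm_sq_mul_sub_mul_le (mem_ball_zero_iff.1 hw).le) hball hne

end PairedProduct

open Asymptotics

section Perturbation

variable {y : ℤ → ℝ} {r : ℝ}

theorem tendsto_abs_intCast_cofinite_atTop :
    Tendsto (fun k : ℤ ↦ |(k : ℝ)|) cofinite atTop :=
  tendsto_norm_cocompact_atTop.comp Int.tendsto_coe_cofinite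

theorem summable_abs_intCast_rpow_div_sq (hr : r < 1) :
    Summable fun k : ℤ ↦ |(k : ℝ)| ^ r / (k : ℝ) ^ 2 := by
  refine (Real.summable_abs_int_rpow (b := 2 - r) (by linarith)).congr fun k ↦ ?_
  rcases eq_or_ne k 0 with rfl | hk
  · simp [Real.zero_rpow (by linarith : r - 2 ≠ 0)]
  · rw [neg_sub, Real.rpow_sub (by positivity), Real.rpow_two, sq_abs]

theorem isEquivalent_intCast_of_isBigO_rpow (hr : r < 1)
    (h : (fun k : ℤ ↦ y k - k) =O[cofinite] fun k ↦ |(k : ℝ)| ^ r) :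
    y ~[cofinite] fun k ↦ (k : ℝ) := by
  have hpow : (fun x : ℝ ↦ x ^ r) =o[atTop] fun x ↦ x := by
    refine (isLittleO_iff_tendsto' ?_).2 ?_
    · filter_upwards [eventually_gt_atTop 0] with x hx h0
      exact absurd h0 hx.ne'
    · refine (tendsto_rpow_neg_atTop (sub_pos.2 hr)).congr' ?_
      filter_upwards [eventually_gt_atTop 0] with x hx
      rw [neg_sub, Real.rpow_sub_one hx.ne']
  exact h.trans_isLittleO (hpow.comp_tendsto tendsto_abs_intCast_cofinite_atTop).of_norm_right

theorem summable_inv_mul_neg (h : (fun k : ℤ ↦ (k : ℝ)) =O[cofinite] y) :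
    Summable fun k : ℤ ↦ (y k * y (-k))⁻¹ := by
  have hneg : (fun k : ℤ ↦ (k : ℝ)) =O[cofinite] fun k ↦ y (-k) := by
    simpa [Function.comp_def, -Int.cofinite_eq] using
      (h.comp_tendsto neg_injective.tendsto_cofinite).neg_left
  have hO : (fun k ↦ (y k * y (-k))⁻¹) =O[cofinite] fun k : ℤ ↦ ((k : ℝ) * k)⁻¹ := by
    refine (h.mul hneg).inv_rev ?_
    filter_upwards [tendsto_abs_intCast_cofinite_atTop.eventually_gt_atTop 0] with k hk hk0
    exact absurd (mul_self_eq_zero.1 hk0) (abs_pos.1 hk)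
  refine summable_of_isBigO (Real.summable_one_div_int_pow.2 one_lt_two) ?_
  simpa only [one_div, sq] using hO

theorem summable_inv_sub_inv_intCast (hr : r < 1)
    (h : (fun k : ℤ ↦ y k - k) =O[cofinite] fun k ↦ |(k : ℝ)| ^ r) :
    Summable fun k : ℤ ↦ (y k)⁻¹ - (k : ℝ)⁻¹ := by
  have hequiv := isEquivalent_intCast_of_isBigO_rpow hr h
  have heq : (fun k : ℤ ↦ (y k)⁻¹ - (k : ℝ)⁻¹) =ᶠ[cofinite]
      fun k ↦ -((y k - k) / (y k * k)) := by
    filter_upwards [tendsto_abs_intCast_cofinite_atTop.eventually_gt_atTop 0,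
      hequiv.isBigO_symm.eq_zero_imp] with k hk hyk
    have hk0 : (k : ℝ) ≠ 0 := abs_pos.1 hk
    rw [inv_sub_inv (mt hyk hk0) hk0, ← neg_div, neg_sub]
  have hO : (fun k : ℤ ↦ (y k - k) / (y k * k)) =O[cofinite]
      fun k ↦ |(k : ℝ)| ^ r / (k : ℝ) ^ 2 := by
    simpa only [div_eq_mul_inv, sq] using
      h.mul (hequiv.isTheta.mul (isTheta_refl _ _)).inv.isBigO
  exact summable_of_isBigO (summable_abs_intCast_rpow_div_sq hr) (heq.trans_isBigO hO.neg_left)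

theorem summable_inv_add_inv_neg (hr : r < 1)
    (h : (fun k : ℤ ↦ y k - k) =O[cofinite] fun k ↦ |(k : ℝ)| ^ r) :
    Summable fun k : ℤ ↦ (y k)⁻¹ + (y (-k))⁻¹ := by
  have hsum := summable_inv_sub_inv_intCast hr h
  refine (hsum.add ((Equiv.neg ℤ).summable_iff.2 hsum)).congr fun k ↦ ?_
  simp only [Function.comp_apply, Equiv.neg_apply, Int.cast_neg, inv_neg]
  ring

theorem isBigO_log_two_add_abs_intCast_rpow (hr : 0 < r) :
    (fun k : ℤ ↦ Real.log (2 + |(k : ℝ)|)) =O[cofinite] fun k ↦ |(k : ℝ)| ^ r := by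
  have hlog : (fun x : ℝ ↦ Real.log (2 + x)) =O[atTop] Real.log := by
    refine .of_bound 2 ?_
    filter_upwards [eventually_ge_atTop 2] with x hx
    rw [Real.norm_of_nonneg (Real.log_nonneg (by linarith)),
      Real.norm_of_nonneg (Real.log_nonneg (by linarith))]
    calc Real.log (2 + x) ≤ Real.log (x ^ 2) := Real.log_le_log (by linarith) (by nlinarith)
      _ = 2 * Real.log x := by simp
  exact (hlog.trans (isLittleO_log_rpow_atTop hr).isBigO).comp_tendsto
    tendsto_abs_intCast_cofinite_atTop

end Perturbation

theorem logDeriv_cexp_const_mul (c z : ℂ) : logDeriv (fun w ↦ Complex.exp (c * w)) z = c := by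
  have hcomp := logDeriv_comp (f := Complex.exp) (g := fun w ↦ c * w) (x := z)
    (by fun_prop) (by fun_prop)
  simpa [Function.comp_def] using hcomp

theorem logDeriv_cexp_mul_one_sub_div_mul {c a z : ℂ} {g : ℂ → ℂ} (ha : a ≠ 0) (hza : z ≠ a)
    (hg : DifferentiableAt ℂ g z) (hgz : g z ≠ 0) :
    logDeriv (fun w ↦ Complex.exp (c * w) * (1 - w / a) * g w) z
      = c + 1 / (z - a) + logDeriv g z := by
  have hexp : Complex.exp (c * z) ≠ 0 := Complex.exp_ne_zero _
  have hlin := one_sub_div_ne_zero hza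
  rw [logDeriv_mul (f := fun w ↦ Complex.exp (c * w) * (1 - w / a)) z (mul_ne_zero hexp hlin) hgz
      (by fun_prop) hg,
    logDeriv_mul (f := fun w ↦ Complex.exp (c * w)) (g := fun w ↦ 1 - w / a) z hexp hlin
      (by fun_prop) (by fun_prop),
    logDeriv_cexp_const_mul, logDeriv_one_sub_div ha]

theorem stmt_6_general (y : ℤ → ℝ) (hy : ∀ k, y k ≠ 0)
    (hp : Summable fun k ↦ (y k * y (-k))⁻¹) (hs : Summable fun k ↦ (y k)⁻¹ + (y (-k))⁻¹)
    (z : ℂ) (hz : ∀ k, z ≠ y k) :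
    Summable (fun k : ℕ =>
      1 / (z - (y ((k : ℤ) + 1) : ℂ)) + 1 / (z - (y (-((k : ℤ) + 1)) : ℂ))) ∧
    deriv (xiFun y) z / xiFun y z
      = Real.pi * Complex.I + 1 / (z - (y 0 : ℂ)) +
          ∑' k : ℕ, (1 / (z - (y ((k : ℤ) + 1) : ℂ)) + 1 / (z - (y (-((k : ℤ) + 1)) : ℂ))) := by
  have hyc (k) : (y k : ℂ) ≠ 0 := Complex.ofReal_ne_zero.2 (hy k)
  have hinj : Function.Injective fun k : ℕ ↦ (k : ℤ) + 1 :=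
    (add_left_injective 1).comp Nat.cast_injective
  have hpc : Summable fun k : ℕ ↦ ((y (k + 1) : ℂ) * y (-(k + 1)))⁻¹ := by
    exact_mod_cast Complex.summable_ofReal.2 (hp.comp_injective hinj)
  have hsc : Summable fun k : ℕ ↦ (y (k + 1) : ℂ)⁻¹ + (y (-(k + 1)) : ℂ)⁻¹ := by
    exact_mod_cast Complex.summable_ofReal.2 (hs.comp_injective hinj)
  have hprod := hasSum_logDeriv_tprod_one_sub_div_mul_one_sub_div (fun _ ↦ hyc _) (fun _ ↦ hyc _)
    hpc hsc (fun _ ↦ hz _) (fun _ ↦ hz _)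
  refine ⟨hprod.summable, ?_⟩
  rw [hprod.tsum_eq, ← logDeriv_apply]
  exact logDeriv_cexp_mul_one_sub_div_mul (hyc 0) (hz 0)
    (differentiable_tprod_one_sub_div_mul_one_sub_div hpc hsc z)
    (tprod_one_sub_div_mul_one_sub_div_ne_zero hpc hsc (fun _ ↦ hz _) (fun _ ↦ hz _))

/-- If `y : ℤ → ℝ` is nonvanishing with `|y_k − k| ≤ C log(2+|k|)`, then for every `z` outside
`{y_k : k ∈ ℤ}` the series `1/(z−y₀) + Σ_{k≥1} [1/(z−y_k) + 1/(z−y_{−k})]` converges and equals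
`ξ′(z)/ξ(z) − iπ`. -/
theorem stmt_6 (C : ℝ) (hC : 0 < C) (y : ℤ → ℝ) (hy : ∀ k : ℤ, y k ≠ 0)
    (hb : ∀ k : ℤ, |y k - k| ≤ C * Real.log (2 + |(k : ℝ)|))
    (z : ℂ) (hz : ∀ k : ℤ, z ≠ (y k : ℂ)) :
    Summable (fun k : ℕ =>
      1 / (z - (y ((k : ℤ) + 1) : ℂ)) + 1 / (z - (y (-((k : ℤ) + 1)) : ℂ))) ∧
    deriv (xiFun y) z / xiFun y z
      = Real.pi * Complex.I + 1 / (z - (y 0 : ℂ)) +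
          ∑' k : ℕ, (1 / (z - (y ((k : ℤ) + 1) : ℂ)) + 1 / (z - (y (-((k : ℤ) + 1)) : ℂ))) := by
  have hO : (fun k : ℤ ↦ y k - k) =O[cofinite] fun k ↦ |(k : ℝ)| ^ (1 / 2 : ℝ) :=
    (IsBigO.of_norm_le hb).trans
      ((isBigO_log_two_add_abs_intCast_rpow one_half_pos).const_mul_left C)
  exact stmt_6_general y hy
    (summable_inv_mul_neg (isEquivalent_intCast_of_isBigO_rpow one_half_lt_one hO).isBigO_symm)
    (summable_inv_add_inv_neg one_half_lt_one hO) z hz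
end

section
/- For every real p > 0 and every compact set K ⊂ ℂ with K ∩ ℝ = ∅, one has sup_{n ≥ 1} ∫_{U(n)} sup_{(z, z′) ∈ K × K} | det(I_n − U*·e^{2πiz′/n}) / det(I_n − U*·e^{2πiz/n}) |^p dμ_n(U) < ∞, where μ_n is the Haar probability measure on the unitary group U(n) and U* is the conjugate transpose of U. (For z with Im z ≠ 0 one has |e^{2πiz/n}| ≠ 1, so the denominator never vanishes and each integrand is a continuous function of U.) -/
/-!
The ratio of characteristic polynomials is bounded by the exponential of a single linear statistic
of the eigenvalues, and that statistic has sub-Gaussian exponential moments, uniformly in the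
dimension.

**Deterministic bound.** Let `a` run over the eigenvalues of `U*` and put `r = n / (n + 1)`. For
`X = e^{2πiz/n}` and `X' = e^{2πiz'/n}` the distances `|X - X'|` and `|X - r|` are `O(1/n)`, while
`|1 - X a|` is at least a constant times `1/n`. Hence `(1 - X' a) / (1 - X a)` equals
`1 + (X - X') a / (1 - r a) + O(n⁻² |1 - r a|⁻²)`. The Poisson kernel identity
`(1 - r²) |1 - r a|⁻² = 1 + 2 Re (r a / (1 - r a))` controls the error term, and so the product
over `a` is at most `exp (C (1 + |Φ| / n))` with `Φ = ∑ a / (1 - r a)`. This bound does not depend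
on `z` and `z'`, which takes care of the supremum.

**Exponential moments.** The geometric series turns `Φ` into the limit of sums
`∑_{k < D} g_k tr (U*)^{k+1}`, and `E |∑ g_k tr U^{k+1}|^{2m} ≤ m! (∑ (k + 1) |g_k|²)^m`, the value
for independent complex Gaussians of variances `k + 1` in place of the traces. Summing over `m`
gives exponential moments, and Fatou's lemma lets `D → ∞`.

**The moment bound.** A product of traces of powers of total degree `d` is the trace of `σ U^{⊗d}`
for a permutation `σ` whose cycle lengths are the exponents. Products of different degrees are
orthogonal by invariance under scalars. In a fixed degree, averaging `X ↦ U^{⊗d} X (U^{⊗d})*`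
projects onto the commutant of the operators `U^{⊗d}`, which is spanned by the permutation
operators (one half of Schur–Weyl duality). For a class function `φ` and `A = ∑ φ(σ) σ`, the second
moment of `tr (A U^{⊗d})` is therefore the trace of the nonnegative operator `X ↦ A X A*` over the
image of the group algebra of the symmetric group, hence at most the trace over the group algebra
itself, which is `d! ∑ |φ(σ)|²` whatever the relation between `d` and `n`. It remains to count the
permutations conjugating one cycle type to another.
-/

open MeasureTheory

/-- Matrices carry the entrywise (product) σ-algebra. -/
instance matrixMeasurableSpace {m n α : Type*} [MeasurableSpace α] :
    MeasurableSpace (Matrix m n α) :=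
  (inferInstance : MeasurableSpace (m → n → α))

namespace HaarRatio

open Matrix Equiv

/-! ### The commutant of the tensor powers of unitary matrices -/

section DoubleCentralizer

variable {k G V κ : Type*} [Field k] [Group G] [Finite G] [NeZero (Nat.card G : k)]

theorem exists_asAlgebraHom_eq_of_commute [AddCommGroup V] [Module k V] [Module.Finite k V]
    (ρ : Representation k G V) {f : Module.End k V}
    (hf : ∀ φ : Module.End k V, (∀ g, Commute φ (ρ g)) → Commute f φ) :
    ∃ x, ρ.asAlgebraHom x = f := by
  let F : Module.End (Module.End (MonoidAlgebra k G) ρ.asModule) ρ.asModule :=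
    { toFun := f
      map_add' := f.map_add
      map_smul' := fun φ v ↦ by
        let φ' : Module.End k V := φ.restrictScalars k
        have hφ (g : G) : Commute φ' (ρ g) := LinearMap.ext fun w ↦ by
          have h := φ.map_smul (MonoidAlgebra.single g 1) (ρ.asModuleEquiv.symm w)
          rw [Representation.single_smul, Representation.single_smul, one_smul, one_smul] at h
          exact h
        exact LinearMap.congr_fun (hf φ' hφ) v }
  obtain ⟨s, hs⟩ := Module.Finite.fg_top (R := k) (M := V)
  obtain ⟨x, hx⟩ := jacobson_density F s
  exact ⟨x, LinearMap.ext_on hs fun v hv ↦ (hx v hv).symm⟩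

theorem mem_span_range_of_commute [Fintype κ] [DecidableEq κ] (ρ : G →* Matrix κ κ k)
    {B : Matrix κ κ k} (hB : ∀ X, (∀ g, Commute X (ρ g)) → Commute B X) :
    B ∈ Submodule.span k (Set.range ρ) := by
  let e : Matrix κ κ k ≃ₐ[k] Module.End k (κ → k) := Matrix.toLinAlgEquiv'
  obtain ⟨x, hx⟩ := exists_asAlgebraHom_eq_of_commute
    (e.toMonoidHom.comp ρ) (f := e B) fun φ hφ ↦ by
      simpa using (hB (e.symm φ) fun g ↦ by simpa using (hφ g).map e.symm).map e
  rw [← e.symm_apply_apply B, ← hx]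
  clear hx
  induction x using MonoidAlgebra.induction_on with
  | of g => exact Submodule.subset_span ⟨g, by simp⟩
  | add x y hx hy => simpa only [map_add] using Submodule.add_mem _ hx hy
  | smul c x hx => simpa only [map_smul] using Submodule.smul_mem _ c hx

end DoubleCentralizer

section TensorPower

variable {R N ι : Type*} [CommSemiring R] [Fintype N] [DecidableEq N] [Fintype ι] [DecidableEq ι]

/-- The tensor power `A ↦ A^{⊗ι}`, written as a matrix indexed by multi-indices `ι → N`. -/
def tensorPow (ι : Type*) [Fintype ι] [DecidableEq ι] :
    Matrix N N R →* Matrix (ι → N) (ι → N) R where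
  toFun A := .of fun i j ↦ ∏ a, A (i a) (j a)
  map_one' := by
    ext i j
    simp [Matrix.one_apply, Finset.prod_ite_zero, funext_iff]
  map_mul' A B := by
    ext i j
    simp [Matrix.mul_apply, Finset.prod_univ_sum, Finset.prod_mul_distrib]

/-- The operators permuting the tensor factors of `(R^N)^{⊗ι}`. -/
def permOp (R N : Type*) [CommSemiring R] [Fintype N] [DecidableEq N] :
    Perm ι →* Matrix (ι → N) (ι → N) R where
  toFun σ := .of fun i j ↦ if i ∘ σ = j then 1 else 0
  map_one' := by
    ext i j
    simp [Matrix.one_apply]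
  map_mul' σ τ := by
    ext i j
    simp only [Matrix.mul_apply, Matrix.of_apply, boole_mul, Finset.sum_ite_eq, Finset.mem_univ,
      if_true]
    rfl

theorem tensorPow_apply (A : Matrix N N R) (i j : ι → N) :
    tensorPow ι A i j = ∏ a, A (i a) (j a) := rfl

theorem tensorPow_conjTranspose [StarRing R] (A : Matrix N N R) :
    tensorPow ι Aᴴ = (tensorPow ι A)ᴴ := by
  ext i j
  simp [tensorPow_apply]

theorem permOp_conjTranspose [StarRing R] (σ : Perm ι) :
    (permOp R N σ)ᴴ = permOp R N σ⁻¹ := by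
  ext i j
  simp [permOp, Equiv.comp_symm_eq, eq_comm (a := i), apply_ite star]

theorem permOp_mul_apply (σ : Perm ι) (X : Matrix (ι → N) (ι → N) R) (i j : ι → N) :
    (permOp R N σ * X) i j = X (i ∘ σ) j := by
  simp [permOp, Matrix.mul_apply]

theorem mul_permOp_apply (σ : Perm ι) (X : Matrix (ι → N) (ι → N) R) (i j : ι → N) :
    (X * permOp R N σ) i j = X i (j ∘ σ.symm) := by
  simp [permOp, Matrix.mul_apply, ← Equiv.eq_comp_symm]

theorem commute_permOp_tensorPow (σ : Perm ι) (A : Matrix N N R) :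
    Commute (permOp R N σ) (tensorPow ι A) := by
  ext i j
  rw [permOp_mul_apply, mul_permOp_apply]
  exact Fintype.prod_equiv σ _ _ fun a ↦ by simp

theorem trace_permOp_mul_tensorPow (σ : Perm ι) (A : Matrix N N R) :
    (permOp R N σ * tensorPow ι A).trace = ∑ i : ι → N, ∏ a, A (i (σ a)) (i a) := by
  simp [Matrix.trace, permOp_mul_apply, tensorPow_apply]

end TensorPower

section Ryser

variable {R N ι : Type*} [CommRing R] [Fintype N] [DecidableEq N] [Fintype ι] [DecidableEq ι]

theorem sum_superset_neg_one_pow_card_compl (S : Finset ι) :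
    ∑ T with S ⊆ T, (-1 : R) ^ Tᶜ.card = if S = Finset.univ then 1 else 0 := by
  have hcompl : ∑ T with S ⊆ T, (-1 : R) ^ Tᶜ.card = ∑ U ∈ Sᶜ.powerset, (-1 : R) ^ U.card :=
    Finset.sum_bij' (fun T _ ↦ Tᶜ) (fun U _ ↦ Uᶜ) (by simp) (by simp [Finset.subset_compl_comm])
      (by simp) (by simp) (by simp)
  have hsum := congrArg (Int.cast : ℤ → R) (Finset.sum_powerset_neg_one_pow_card (x := Sᶜ))
  push_cast at hsum
  rw [hcompl, hsum]
  simp [Finset.compl_eq_empty_iff]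

theorem sum_perm_eq_sum_bijective (f : (ι → ι) → R) :
    ∑ σ : Perm ι, f σ = ∑ g with Function.Bijective g, f g :=
  Finset.sum_bij (fun σ _ ↦ ⇑σ) (by simp) (fun _ _ _ _ h ↦ Equiv.coe_fn_injective h)
    (fun g hg ↦ ⟨Equiv.ofBijective g (by simpa using hg), by simp⟩) fun _ _ ↦ rfl

theorem permanent_eq_ryser (M : Matrix ι ι R) :
    M.permanent = ∑ T : Finset ι, (-1) ^ Tᶜ.card * ∏ a, ∑ c ∈ T, M c a := by
  have hprod (T : Finset ι) : ∏ a, ∑ c ∈ T, M c a =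
      ∑ g : ι → ι, if Finset.univ.image g ⊆ T then ∏ a, M (g a) a else 0 := by
    rw [Finset.prod_univ_sum, ← Finset.sum_filter]
    exact Finset.sum_congr (by ext; simp [Finset.image_subset_iff]) fun _ _ ↦ rfl
  have himage (g : ι → ι) : Finset.univ.image g = Finset.univ ↔ Function.Bijective g := by
    rw [← Finite.surjective_iff_bijective, ← Finset.coe_inj]
    simp [Set.range_eq_univ]
  calc M.permanent = ∑ g : ι → ι, if Function.Bijective g then ∏ a, M (g a) a else 0 := by
        rw [← Finset.sum_filter, ← sum_perm_eq_sum_bijective fun g ↦ ∏ a, M (g a) a]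
        rfl
    _ = ∑ g : ι → ι, ∑ T with Finset.univ.image g ⊆ T, (-1) ^ Tᶜ.card * ∏ a, M (g a) a := by
        simp_rw [← Finset.sum_mul, sum_superset_neg_one_pow_card_compl, himage, ite_mul, one_mul,
          zero_mul]
    _ = ∑ T : Finset ι, (-1) ^ Tᶜ.card * ∏ a, ∑ c ∈ T, M c a := by
        simp_rw [hprod, Finset.mul_sum, mul_ite, mul_zero, Finset.sum_filter]
        exact Finset.sum_comm

theorem sum_perm_single_comp (i j : ι → N) :
    ∑ σ : Perm ι, Matrix.single (i ∘ σ) (j ∘ σ) (1 : R) = ∑ T : Finset ι,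
      (-1 : R) ^ Tᶜ.card • tensorPow ι (∑ c ∈ T, Matrix.single (i c) (j c) 1) := by
  ext k l
  have h := permanent_eq_ryser (R := R)
    (.of fun c a ↦ Matrix.single (i c) (j c) (1 : R) (k a) (l a))
  simp only [Matrix.sum_apply, Matrix.smul_apply, tensorPow_apply, smul_eq_mul]
  refine Eq.trans ?_ h
  rw [Matrix.permanent]
  refine Finset.sum_congr rfl fun σ _ ↦ ?_
  simp [Matrix.single_apply, Finset.prod_ite_zero, funext_iff, forall_and]

theorem commute_of_commute_permOp {k : Type*} [Field k] [CharZero k]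
    {B X : Matrix (ι → N) (ι → N) k}
    (hB : ∀ A, Commute B (tensorPow ι A)) (hX : ∀ σ, Commute X (permOp k N σ)) : Commute B X := by
  have hX' (σ : Perm ι) (i j : ι → N) : X (i ∘ σ) (j ∘ σ) = X i j := by
    have h := congrFun₂ (hX σ) i (j ∘ σ)
    rw [mul_permOp_apply, permOp_mul_apply] at h
    simpa [Function.comp_assoc] using h.symm
  have hsym : (Fintype.card (Perm ι) : k) • X =
      ∑ i, ∑ j, X i j • ∑ σ : Perm ι, Matrix.single (i ∘ σ) (j ∘ σ) 1 := by
    have hσ (σ : Perm ι) : ∑ i, ∑ j, X i j • Matrix.single (i ∘ σ) (j ∘ σ) 1 = X := by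
      ext i' j'
      simp [Matrix.sum_apply, Matrix.single_apply, ← Equiv.eq_comp_symm, ite_and,
        ← hX' σ (i' ∘ σ.symm) (j' ∘ σ.symm), Function.comp_assoc]
    simp_rw [Finset.smul_sum]
    rw [Finset.sum_congr rfl fun i _ ↦ Finset.sum_comm, Finset.sum_comm, Finset.sum_congr rfl
      fun σ _ ↦ hσ σ, Finset.sum_const, Finset.card_univ, Nat.cast_smul_eq_nsmul]
  have hcomm : Commute B ((Fintype.card (Perm ι) : k) • X) := by
    rw [hsym]
    refine .sum_right _ _ _ fun i _ ↦ .sum_right _ _ _ fun j _ ↦ .smul_right ?_ _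
    rw [sum_perm_single_comp]
    exact .sum_right _ _ _ fun T _ ↦ (hB _).smul_right _
  have hcard : (Fintype.card (Perm ι) : k) ≠ 0 := by simp
  simpa [smul_smul, hcard] using hcomm.smul_right (Fintype.card (Perm ι) : k)⁻¹

end Ryser

section UnitaryDensity

section

variable {N ι : Type*} [Fintype ι]

theorem card_fiber_eq_of_prod_comp_eq [DecidableEq N] {k l : ι → N}
    (h : ∀ z : N → ℂ, (∀ c, ‖z c‖ = 1) → ∏ a, z (k a) = ∏ a, z (l a)) (c : N) :
    Fintype.card {a // k a = c} = Fintype.card {a // l a = c} := by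
  have hζ := Complex.isPrimitiveRoot_exp (Fintype.card ι + 1) (Nat.succ_ne_zero _)
  set ζ := Complex.exp (2 * Real.pi * Complex.I / (Fintype.card ι + 1 : ℕ))
  have hz (b : N) : ‖Function.update (1 : N → ℂ) c ζ b‖ = 1 := by
    rcases eq_or_ne b c with rfl | hb
    · simpa using hζ.norm'_eq_one (Nat.succ_ne_zero _)
    · simp [hb]
  have hprod (k : ι → N) :
      ∏ a, Function.update (1 : N → ℂ) c ζ (k a) = ζ ^ Fintype.card {a // k a = c} := by
    simp [Function.update_apply, Finset.prod_ite, Fintype.card_subtype]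
  refine hζ.pow_inj (Nat.lt_succ_of_le (Fintype.card_subtype_le _))
    (Nat.lt_succ_of_le (Fintype.card_subtype_le _)) ?_
  rw [← hprod, ← hprod, h _ hz]

theorem prod_comp_eq_of_forall_norm_eq_one [Finite N] {k l : ι → N}
    (h : ∀ z : N → ℂ, (∀ c, ‖z c‖ = 1) → ∏ a, z (k a) = ∏ a, z (l a)) (z : N → ℂ) :
    ∏ a, z (k a) = ∏ a, z (l a) := by
  classical
  have := Fintype.ofFinite N
  have hprod (k : ι → N) : ∏ a, z (k a) = ∏ c, z c ^ Fintype.card {a // k a = c} := by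
    rw [← Finset.prod_fiberwise' _ k z]
    simp [Fintype.card_subtype]
  simp_rw [hprod, card_fiber_eq_of_prod_comp_eq h]

end

variable {N ι : Type*} [Fintype N] [DecidableEq N] [Fintype ι] [DecidableEq ι]

theorem tensorPow_diagonal {R : Type*} [CommSemiring R] (z : N → R) :
    tensorPow ι (diagonal z) = diagonal fun k ↦ ∏ a, z (k a) := by
  ext k l
  simp [tensorPow_apply, diagonal_apply, Finset.prod_ite_zero, funext_iff]

theorem commute_diagonal_iff {R κ : Type*} [CommRing R] [NoZeroDivisors R] [Fintype κ]
    [DecidableEq κ] {B : Matrix κ κ R} {d : κ → R} :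
    Commute B (diagonal d) ↔ ∀ k l, B k l ≠ 0 → d k = d l := by
  rw [commute_iff_eq, ← Matrix.ext_iff]
  refine forall₂_congr fun k l ↦ ?_
  rw [mul_diagonal, diagonal_mul, mul_comm (d k), mul_eq_mul_left_iff, or_iff_not_imp_right,
    eq_comm (a := d l)]

theorem diagonal_mem_unitaryGroup {z : N → ℂ} (hz : ∀ c, ‖z c‖ = 1) :
    diagonal z ∈ unitaryGroup N ℂ := by
  rw [mem_unitaryGroup_iff, star_eq_conjTranspose, diagonal_conjTranspose, diagonal_mul_diagonal,
    ← diagonal_one]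
  congr 1
  funext c
  simp [Complex.mul_conj, Complex.normSq_eq_norm_sq, hz c]

variable {B : Matrix (ι → N) (ι → N) ℂ}

theorem commute_tensorPow_diagonal (hB : ∀ U ∈ unitaryGroup N ℂ, Commute B (tensorPow ι U))
    (z : N → ℂ) : Commute B (tensorPow ι (diagonal z)) := by
  rw [tensorPow_diagonal, commute_diagonal_iff]
  intro k l hkl
  refine prod_comp_eq_of_forall_norm_eq_one (fun w hw ↦ ?_) z
  have h := hB _ (diagonal_mem_unitaryGroup hw)
  rw [tensorPow_diagonal, commute_diagonal_iff] at h
  exact h k l hkl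

theorem commute_tensorPow_of_isHermitian (hB : ∀ U ∈ unitaryGroup N ℂ, Commute B (tensorPow ι U))
    {H : Matrix N N ℂ} (hH : H.IsHermitian) : Commute B (tensorPow ι H) := by
  rw [hH.spectral_theorem, Unitary.conjStarAlgAut_apply, map_mul, map_mul]
  exact ((hB _ (SetLike.coe_mem _)).mul_right (commute_tensorPow_diagonal hB _)).mul_right
    (hB _ (star hH.eigenvectorUnitary).2)

theorem eq_zero_of_forall_ofReal {f : ℂ → ℂ} (hf : Differentiable ℂ f)
    (hreal : ∀ t : ℝ, f t = 0) (z : ℂ) : f z = 0 := by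
  refine congrFun (AnalyticOnNhd.eq_of_frequently_eq (z₀ := 0) (g := 0) (fun z _ ↦ hf.analyticAt z)
    analyticOnNhd_const ?_) z
  have hlim : Filter.Tendsto (fun t : ℝ ↦ (t : ℂ)) (nhdsWithin 0 {0}ᶜ) (nhdsWithin 0 {0}ᶜ) :=
    tendsto_nhdsWithin_iff.2
      ⟨by simpa using (Complex.continuous_ofReal.tendsto 0).mono_left nhdsWithin_le_nhds,
        by filter_upwards [self_mem_nhdsWithin] with t ht using by simpa using ht⟩
  exact hlim.frequently (Filter.Frequently.of_forall hreal)

open ComplexStarModule in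
theorem commute_tensorPow_of_unitary (hB : ∀ U ∈ unitaryGroup N ℂ, Commute B (tensorPow ι U))
    (A : Matrix N N ℂ) : Commute B (tensorPow ι A) := by
  let C (z : ℂ) : Matrix N N ℂ := (ℜ A : Matrix N N ℂ) + z • (ℑ A : Matrix N N ℂ)
  have hreal (t : ℝ) : Commute B (tensorPow ι (C t)) :=
    commute_tensorPow_of_isHermitian hB (ℜ A + t • ℑ A).2
  have hall (z : ℂ) : Commute B (tensorPow ι (C z)) := by
    ext k l
    rw [← sub_eq_zero]
    refine eq_zero_of_forall_ofReal
      (f := fun z ↦ (B * tensorPow ι (C z)) k l - (tensorPow ι (C z) * B) k l) ?_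
      (fun t ↦ by rw [hreal t, sub_self]) z
    simp only [Matrix.mul_apply, tensorPow_apply, C, Matrix.add_apply, Matrix.smul_apply]
    fun_prop
  simpa [C, realPart_add_I_smul_imaginaryPart] using hall Complex.I

theorem mem_span_permOp_of_commute (hB : ∀ U ∈ unitaryGroup N ℂ, Commute B (tensorPow ι U)) :
    B ∈ Submodule.span ℂ (Set.range (permOp (ι := ι) ℂ N)) :=
  mem_span_range_of_commute _ fun _ hX ↦
    commute_of_commute_permOp (commute_tensorPow_of_unitary hB) hX

end UnitaryDensity

/-! ### Second moments of class functions -/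

section TraceInequality

open scoped ComplexOrder

theorem trace_comp_le_trace {𝕜 V W : Type*} [RCLike 𝕜] [NormedAddCommGroup V]
    [InnerProductSpace 𝕜 V] [FiniteDimensional 𝕜 V] [AddCommGroup W] [Module 𝕜 W]
    [FiniteDimensional 𝕜 W] {R : V →ₗ[𝕜] W} {L E : Module.End 𝕜 W} {S : Module.End 𝕜 V}
    (hE : ∀ w, E w ∈ R.range) (hER : E ∘ₗ R = R) (hLR : L ∘ₗ R = R ∘ₗ S) (hS : S.IsPositive) :
    LinearMap.trace 𝕜 W (L ∘ₗ E) ≤ LinearMap.trace 𝕜 V S := by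
  have := FiniteDimensional.complete 𝕜 V
  let Q : Module.End 𝕜 V := R.ker.starProjection
  have hQ : IsIdempotentElem Q := LinearMap.ext fun v ↦
    R.ker.starProjection_eq_self_iff.2 (R.ker.starProjection_apply_mem v)
  have hQadj : Q.adjoint = Q := (LinearMap.isSymmetric_iff_isSelfAdjoint Q).1
    R.ker.starProjection_isSymmetric
  have hker (v : V) : v ∈ R.ker ↔ (1 - Q) v = 0 := by
    simp [Q, sub_eq_zero, eq_comm (a := v), Submodule.starProjection_eq_self_iff]
  have hRQ (v : V) : R ((1 - Q) v) = R v := by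
    have hQv : R (Q v) = 0 := R.ker.starProjection_apply_mem v
    rw [LinearMap.sub_apply, map_sub, hQv, sub_zero, Module.End.one_apply]
  obtain ⟨t, ht⟩ := R.rangeRestrict.exists_rightInverse_of_surjective R.range_rangeRestrict
  have ht (w : R.range) : R (t w) = w := congrArg Subtype.val (LinearMap.congr_fun ht w)
  let s : W →ₗ[𝕜] V := (1 - Q) ∘ₗ t ∘ₗ E.codRestrict R.range hE
  have hRs : R ∘ₗ s = E := LinearMap.ext fun w ↦ (hRQ _).trans (ht _)
  have hsR : s ∘ₗ R = 1 - Q := LinearMap.ext fun v ↦ by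
    rw [← sub_eq_zero, LinearMap.comp_apply, LinearMap.comp_apply, LinearMap.comp_apply, ← map_sub,
      ← hker, LinearMap.mem_ker, map_sub, ht, sub_eq_zero]
    exact LinearMap.congr_fun hER v
  have hnonneg : 0 ≤ LinearMap.trace 𝕜 V (S * Q) := by
    have h := (hS.conj_adjoint Q).trace_nonneg
    rwa [hQadj, LinearMap.trace_comp_comm', LinearMap.comp_assoc, ← Module.End.mul_eq_comp,
      ← Module.End.mul_eq_comp, hQ.eq] at h
  calc LinearMap.trace 𝕜 W (L ∘ₗ E) = LinearMap.trace 𝕜 V (S * (1 - Q)) := by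
        rw [← hRs, ← LinearMap.comp_assoc, hLR, LinearMap.comp_assoc, LinearMap.trace_comp_comm',
          LinearMap.comp_assoc, hsR, Module.End.mul_eq_comp]
    _ ≤ LinearMap.trace 𝕜 V S := by
        rw [mul_sub, mul_one, map_sub]
        exact sub_le_self _ hnonneg

theorem trace_mulLeft_comp_mulRight {R κ : Type*} [CommRing R] [Fintype κ] (A B : Matrix κ κ R) :
    LinearMap.trace R _ (LinearMap.mulLeft R A ∘ₗ LinearMap.mulRight R B) =
      A.trace * B.trace := by
  classical
  rw [LinearMap.trace_eq_matrix_trace R (Matrix.stdBasis R κ κ), Matrix.trace,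
    Fintype.sum_prod_type, Matrix.trace, Matrix.trace, Finset.sum_mul_sum]
  refine Finset.sum_congr rfl fun k _ ↦ Finset.sum_congr rfl fun l _ ↦ ?_
  rw [Matrix.diag_apply, LinearMap.toMatrix_apply, Matrix.stdBasis_eq_single]
  change (A * (Matrix.single k l 1 * B) : Matrix κ κ R) k l = _
  simp [Matrix.mul_apply, Matrix.single_apply, ite_and, Matrix.diag_apply]

end TraceInequality

section GroupAlgebra

variable {G κ : Type*} [Group G] [Fintype G] [Fintype κ] [DecidableEq κ]

/-- The linear extension of a matrix representation to the group algebra, whose elements are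
identified with functions `G → ℂ` and carry the `ℓ²` inner product. -/
noncomputable def groupOp (ρ : G →* Matrix κ κ ℂ) : EuclideanSpace ℂ G →ₗ[ℂ] Matrix κ κ ℂ :=
  Fintype.linearCombination ℂ ρ ∘ₗ WithLp.linearEquiv 2 ℂ (G → ℂ)

/-- The matrix of convolution by `φ` on the group algebra. -/
def convMatrix (φ : G → ℂ) : Matrix G G ℂ := .of fun g h ↦ φ (g * h⁻¹)

theorem groupOp_apply (ρ : G →* Matrix κ κ ℂ) (x : EuclideanSpace ℂ G) :
    groupOp ρ x = ∑ g, x g • ρ g := rfl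

theorem range_groupOp (ρ : G →* Matrix κ κ ℂ) :
    (groupOp ρ).range = Submodule.span ℂ (Set.range ρ) := by
  rw [groupOp, LinearMap.range_comp_of_range_eq_top _ (LinearEquiv.range _),
    Fintype.range_linearCombination]

theorem trace_convMatrix_mul_conjTranspose (φ : G → ℂ) :
    (convMatrix φ * (convMatrix φ)ᴴ).trace = ((Fintype.card G * ∑ g, ‖φ g‖ ^ 2 : ℝ) : ℂ) := by
  have hdiag (g : G) : (convMatrix φ * (convMatrix φ)ᴴ).diag g = ((∑ h, ‖φ h‖ ^ 2 : ℝ) : ℂ) := by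
    rw [Matrix.diag_apply, Matrix.mul_apply]
    push_cast
    refine Fintype.sum_equiv ((Equiv.inv _).trans (Equiv.mulLeft g)) _ _ fun h ↦ ?_
    exact Complex.mul_conj' _
  rw [Matrix.trace, Finset.sum_congr rfl fun g _ ↦ hdiag g]
  simp

variable [DecidableEq G]

theorem groupOp_convMatrix (ρ : G →* Matrix κ κ ℂ) (φ : G → ℂ) (x : EuclideanSpace ℂ G) :
    groupOp ρ (toEuclideanLin (convMatrix φ) x) = groupOp ρ (.toLp 2 φ) * groupOp ρ x := by
  simp only [groupOp_apply, toLpLin_apply, Matrix.mulVec, dotProduct, convMatrix, Matrix.of_apply,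
    Finset.sum_smul, Finset.sum_mul, Finset.mul_sum]
  rw [Finset.sum_comm]
  refine Finset.sum_congr rfl fun h _ ↦ Fintype.sum_equiv (Equiv.mulRight h⁻¹) _ _ fun g ↦ ?_
  simp only [Equiv.coe_mulRight, Matrix.smul_mul, Matrix.mul_smul, smul_smul, ← map_mul,
    inv_mul_cancel_right, mul_comm (x h)]

theorem groupOp_convMatrix_conjTranspose {ρ : G →* Matrix κ κ ℂ} (hρ : ∀ g, (ρ g)ᴴ = ρ g⁻¹)
    {φ : G → ℂ} (hφ : ∀ g h, φ (h * g * h⁻¹) = φ g) (x : EuclideanSpace ℂ G) :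
    groupOp ρ (toEuclideanLin (convMatrix φ)ᴴ x) = groupOp ρ x * (groupOp ρ (.toLp 2 φ))ᴴ := by
  simp only [groupOp_apply, toLpLin_apply, Matrix.mulVec, dotProduct, convMatrix, Matrix.of_apply,
    Finset.sum_smul, Finset.sum_mul, Finset.mul_sum, Matrix.conjTranspose_sum,
    Matrix.conjTranspose_apply, Matrix.conjTranspose_smul, hρ]
  rw [Finset.sum_comm]
  conv_rhs => rw [Finset.sum_comm]
  refine Finset.sum_congr rfl fun h _ ↦
    Fintype.sum_equiv ((Equiv.inv _).trans (Equiv.mulRight h)) _ _ fun g ↦ ?_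
  have hconj : φ (h * g⁻¹) = φ (g⁻¹ * h) := by
    rw [← hφ (g⁻¹ * h) h]
    group
  simp only [Equiv.trans_apply, Equiv.inv_apply, Equiv.coe_mulRight, Matrix.smul_mul,
    Matrix.mul_smul, smul_smul, ← map_mul, hconj, _root_.mul_inv_rev, inv_inv, mul_inv_cancel_left]

end GroupAlgebra

section Averaging

open scoped Matrix.Norms.L2Operator

theorem trace_eq_integral {Ω V : Type*} [MeasurableSpace Ω] {μ : Measure Ω}
    [NormedAddCommGroup V] [NormedSpace ℂ V] [FiniteDimensional ℂ V] {F : Ω → Module.End ℂ V}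
    {L : Module.End ℂ V} (hF : ∀ v, Integrable (fun ω ↦ F ω v) μ)
    (hL : ∀ v, L v = ∫ ω, F ω v ∂μ) :
    LinearMap.trace ℂ V L = ∫ ω, LinearMap.trace ℂ V (F ω) ∂μ := by
  have := FiniteDimensional.complete ℂ V
  let b := Module.finBasis ℂ V
  let c (i) : V →L[ℂ] ℂ := (b.coord i).toContinuousLinearMap
  have htrace (f : Module.End ℂ V) : LinearMap.trace ℂ V f = ∑ i, c i (f (b i)) := by
    rw [LinearMap.trace_eq_matrix_trace ℂ b]
    exact Finset.sum_congr rfl fun i _ ↦ LinearMap.toMatrix_apply b b f i i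
  simp_rw [htrace, hL]
  rw [integral_finsetSum _ fun i _ ↦ (c i).integrable_comp (hF _)]
  exact Finset.sum_congr rfl fun i _ ↦ ((c i).integral_comp_comm (hF _)).symm

variable {𝒰 κ : Type*} [TopologicalSpace 𝒰] [CompactSpace 𝒰] [MeasurableSpace 𝒰]
  [OpensMeasurableSpace 𝒰] (μ : Measure 𝒰)

theorem integrable_of_continuous [IsFiniteMeasureOnCompacts μ] {E : Type*} [NormedAddCommGroup E]
    {f : 𝒰 → E} (hf : Continuous f) : Integrable f μ :=
  hf.integrable_of_hasCompactSupport (.of_compactSpace f)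

variable [Group 𝒰] [IsProbabilityMeasure μ] [Fintype κ] [DecidableEq κ]
  (T : 𝒰 →ₜ* Matrix κ κ ℂ)

theorem integrable_conj (X : Matrix κ κ ℂ) : Integrable (fun U ↦ T U * X * (T U)ᴴ) μ :=
  integrable_of_continuous μ (by fun_prop)

/-- The average `X ↦ ∫ T(U) X T(U)ᴴ dμ(U)` of the conjugates of a matrix. -/
noncomputable def average : Module.End ℂ (Matrix κ κ ℂ) where
  toFun X := ∫ U, T U * X * (T U)ᴴ ∂μ
  map_add' X Y := by
    simp_rw [mul_add, add_mul]
    exact integral_add (integrable_conj μ T X) (integrable_conj μ T Y)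
  map_smul' c X := by
    simp_rw [mul_smul_comm, smul_mul_assoc]
    exact integral_smul c _

theorem average_apply (X : Matrix κ κ ℂ) : average μ T X = ∫ U, T U * X * (T U)ᴴ ∂μ := rfl

theorem trace_conj_comp_average (A : Matrix κ κ ℂ) :
    LinearMap.trace ℂ _ ((LinearMap.mulLeft ℂ A ∘ₗ LinearMap.mulRight ℂ Aᴴ) ∘ₗ average μ T) =
      ((∫ U, ‖(A * T U).trace‖ ^ 2 ∂μ : ℝ) : ℂ) := by
  have hconj (U : 𝒰) (X : Matrix κ κ ℂ) :
      A * T U * X * (A * T U)ᴴ = A * (T U * X * (T U)ᴴ) * Aᴴ := by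
    simp only [conjTranspose_mul, mul_assoc]
  rw [trace_eq_integral (μ := μ)
    (F := fun U ↦ LinearMap.mulLeft ℂ (A * T U) ∘ₗ LinearMap.mulRight ℂ (A * T U)ᴴ)]
  · rw [← integral_complex_ofReal]
    refine integral_congr_ae (.of_forall fun U ↦ ?_)
    dsimp only
    rw [trace_mulLeft_comp_mulRight, trace_conjTranspose, Complex.ofReal_pow]
    exact Complex.mul_conj' _
  · exact fun X ↦ integrable_of_continuous μ <|
      show Continuous fun U ↦ A * T U * (X * (A * T U)ᴴ) by fun_prop
  · intro X
    simp only [LinearMap.comp_apply, LinearMap.mulLeft_apply, LinearMap.mulRight_apply,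
      average_apply, hconj, ← mul_assoc (A * T _)]
    rw [← mul_assoc, integral_mul_const_of_integrable ((integrable_conj μ T X).const_mul A),
      integral_const_mul_of_integrable (integrable_conj μ T X)]

variable {T}

theorem average_eq_self (hT : ∀ U, T U ∈ unitaryGroup κ ℂ) {X : Matrix κ κ ℂ}
    (hX : ∀ U, Commute X (T U)) : average μ T X = X := by
  have hconj (U : 𝒰) : T U * X * (T U)ᴴ = X := by
    rw [← (hX U).eq, mul_assoc, ← star_eq_conjTranspose, mem_unitaryGroup_iff.1 (hT U), mul_one]
  simp [average_apply, hconj]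

variable [MeasurableMul 𝒰] [μ.IsMulLeftInvariant]

theorem commute_average (hT : ∀ U, T U ∈ unitaryGroup κ ℂ) (X : Matrix κ κ ℂ) (V : 𝒰) :
    Commute (average μ T X) (T V) := by
  have hintegrable := integrable_conj μ T X
  calc average μ T X * T V = ∫ U, T U * X * (T U)ᴴ * T V ∂μ :=
        (integral_mul_const_of_integrable hintegrable).symm
    _ = ∫ U, T (V * U) * X * (T (V * U))ᴴ * T V ∂μ :=
        (integral_mul_left_eq_self (fun U ↦ T U * X * (T U)ᴴ * T V) V).symm
    _ = ∫ U, T V * (T U * X * (T U)ᴴ) ∂μ := by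
        have hV : (T V)ᴴ * T V = 1 := mem_unitaryGroup_iff'.1 (hT V)
        simp only [map_mul, conjTranspose_mul, mul_assoc, hV, mul_one]
    _ = T V * average μ T X := integral_const_mul_of_integrable hintegrable

end Averaging

section SecondMoment

open scoped ComplexOrder

variable {𝒰 κ G : Type*} [Group 𝒰] [TopologicalSpace 𝒰] [CompactSpace 𝒰] [MeasurableSpace 𝒰]
  [OpensMeasurableSpace 𝒰] [MeasurableMul 𝒰] [Fintype κ] [DecidableEq κ] [Group G] [Fintype G]
  (μ : Measure 𝒰) [IsProbabilityMeasure μ] [μ.IsMulLeftInvariant]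

theorem integral_norm_trace_groupOp_mul_sq_le {T : 𝒰 →ₜ* Matrix κ κ ℂ} {ρ : G →* Matrix κ κ ℂ}
    (hT : ∀ U, T U ∈ unitaryGroup κ ℂ) (hρ : ∀ g, (ρ g)ᴴ = ρ g⁻¹)
    (hcomm : ∀ g U, Commute (ρ g) (T U))
    (hspan : ∀ B, (∀ U, Commute B (T U)) → B ∈ Submodule.span ℂ (Set.range ρ))
    {φ : G → ℂ} (hφ : ∀ g h, φ (h * g * h⁻¹) = φ g) :
    ∫ U, ‖(groupOp ρ (.toLp 2 φ) * T U).trace‖ ^ 2 ∂μ ≤ Fintype.card G * ∑ g, ‖φ g‖ ^ 2 := by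
  classical
  set A := groupOp ρ (.toLp 2 φ) with hA
  let C := convMatrix φ * (convMatrix φ)ᴴ
  have hrange (X : Matrix κ κ ℂ) : average μ T X ∈ (groupOp ρ).range := by
    rw [range_groupOp]
    exact hspan _ (commute_average μ hT X)
  have hfix : average μ T ∘ₗ groupOp ρ = groupOp ρ := LinearMap.ext fun x ↦ by
    refine average_eq_self μ hT fun U ↦ .sum_left _ _ _ fun g _ ↦ (hcomm g U).smul_left _
  have hinter : (LinearMap.mulLeft ℂ A ∘ₗ LinearMap.mulRight ℂ Aᴴ) ∘ₗ groupOp ρ =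
      groupOp ρ ∘ₗ toEuclideanLin C := LinearMap.ext fun x ↦ by
    simp only [C, LinearMap.comp_apply, LinearMap.mulLeft_apply, LinearMap.mulRight_apply,
      toLpLin_mul_same, groupOp_convMatrix, groupOp_convMatrix_conjTranspose hρ hφ, ← hA]
  have hpos : (toEuclideanLin C).IsPositive :=
    isPositive_toEuclideanLin_iff.2 (posSemidef_self_mul_conjTranspose _)
  have htrace : LinearMap.trace ℂ _ (toEuclideanLin C) = C.trace := by
    rw [toEuclideanLin_eq_toLin_orthonormal, trace_toLin_eq]
  have hle := trace_comp_le_trace hrange hfix hinter hpos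
  rw [trace_conj_comp_average, htrace, trace_convMatrix_mul_conjTranspose] at hle
  exact_mod_cast hle

end SecondMoment

section UnitaryGroup

variable {N : Type*} [Fintype N] [DecidableEq N]

instance borelSpace_matrix {N : Type*} [Countable N] : BorelSpace (Matrix N N ℂ) :=
  inferInstanceAs (BorelSpace (N → N → ℂ))

instance compactSpace_unitaryGroup : CompactSpace (unitaryGroup N ℂ) := by
  refine isCompact_iff_compactSpace.1 (IsCompact.of_isClosed_subset
    (isCompact_univ_pi fun _ ↦ isCompact_univ_pi fun _ ↦ isCompact_closedBall (0 : ℂ) 1)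
    (isClosed_unitary (R := Matrix N N ℂ)) fun U hU i _ j _ ↦ ?_)
  simpa using entry_norm_bound_of_unitary hU i j

variable (N) in
/-- The representation `U ↦ U^{⊗ι}` of the unitary group. -/
def unitaryTensorPow (ι : Type*) [Fintype ι] [DecidableEq ι] :
    unitaryGroup N ℂ →ₜ* Matrix (ι → N) (ι → N) ℂ where
  toMonoidHom := (tensorPow ι).comp (unitaryGroup N ℂ).subtype
  continuous_toFun := continuous_matrix fun i j ↦
    continuous_finsetProd _ fun a _ ↦ continuous_subtype_val.matrix_elem (i a) (j a)

theorem tensorPow_mem_unitaryGroup {ι : Type*} [Fintype ι] [DecidableEq ι] {U : Matrix N N ℂ}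
    (hU : U ∈ unitaryGroup N ℂ) : tensorPow ι U ∈ unitaryGroup (ι → N) ℂ := by
  rw [mem_unitaryGroup_iff, star_eq_conjTranspose, ← tensorPow_conjTranspose, ← map_mul,
    ← star_eq_conjTranspose, mem_unitaryGroup_iff.1 hU, map_one]

theorem integral_norm_trace_permOp_sq_le (μ : Measure (unitaryGroup N ℂ))
    [IsProbabilityMeasure μ] [μ.IsMulLeftInvariant] {ι : Type*} [Fintype ι] [DecidableEq ι]
    {φ : Perm ι → ℂ} (hφ : ∀ σ τ, φ (τ * σ * τ⁻¹) = φ σ) :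
    ∫ U : unitaryGroup N ℂ, ‖∑ σ, φ σ * (permOp ℂ N σ * tensorPow ι U.1).trace‖ ^ 2 ∂μ ≤
      (Fintype.card ι).factorial * ∑ σ, ‖φ σ‖ ^ 2 := by
  have h := integral_norm_trace_groupOp_mul_sq_le μ (T := unitaryTensorPow N ι)
    (fun U ↦ tensorPow_mem_unitaryGroup U.2) permOp_conjTranspose
    (fun σ U ↦ commute_permOp_tensorPow σ U.1)
    (fun B hB ↦ mem_span_permOp_of_commute fun U hU ↦ hB ⟨U, hU⟩) hφ
  have happly (U : unitaryGroup N ℂ) : unitaryTensorPow N ι U = tensorPow ι U.1 := rfl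
  simpa only [happly, groupOp_apply, Finset.sum_mul, smul_mul_assoc, trace_sum, trace_smul,
    smul_eq_mul, Fintype.card_perm] using h

end UnitaryGroup

/-! ### Moments of traces of powers -/

section Cycles

variable {I J : Type*}

/-- The disjoint union of cycles indexed by `I`, the `i`-th of length `κ i + 1`. -/
abbrev Cycles (κ : I → ℕ) : Type _ := Σ i, Fin (κ i + 1)

/-- The permutation of `Cycles κ` advancing each cycle by one step. -/
def rotate (κ : I → ℕ) : Perm (Cycles κ) := Equiv.sigmaCongrRight fun _ ↦ Equiv.addRight 1

theorem rotate_apply (κ : I → ℕ) (i : I) (a : Fin (κ i + 1)) : rotate κ ⟨i, a⟩ = ⟨i, a + 1⟩ := rfl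

open scoped Fin.NatCast Fin.CommRing in
theorem iterate_rotate_apply (κ : I → ℕ) (x : Cycles κ) (s : ℕ) :
    (rotate κ)^[s] x = ⟨x.1, x.2 + (s : Fin (κ x.1 + 1))⟩ := by
  induction s with
  | zero => simp
  | succ s ih => rw [Function.iterate_succ_apply', ih, rotate_apply, Nat.cast_succ, add_assoc]

theorem iterate_rotate_eq_self_iff (κ : I → ℕ) (x : Cycles κ) (s : ℕ) :
    (rotate κ)^[s] x = x ↔ κ x.1 + 1 ∣ s := by
  rw [iterate_rotate_apply, Sigma.ext_iff]
  simp [Fin.natCast_eq_zero]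

theorem exists_iterate_rotate_eq {κ : I → ℕ} {x y : Cycles κ} (h : x.1 = y.1) :
    ∃ s, (rotate κ)^[s] x = y := by
  obtain ⟨i, a⟩ := x
  obtain ⟨j, b⟩ := y
  obtain rfl : i = j := h
  exact ⟨(b - a).val, by rw [iterate_rotate_apply]; simp⟩

variable {κ : I → ℕ} {κ' : J → ℕ}

theorem length_apply_fst_of_semiconj {τ : Cycles κ ≃ Cycles κ'}
    (hτ : Function.Semiconj τ (rotate κ) (rotate κ')) (x : Cycles κ) : κ' (τ x).1 = κ x.1 := by
  have hdvd (s : ℕ) : κ' (τ x).1 + 1 ∣ s ↔ κ x.1 + 1 ∣ s := by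
    rw [← iterate_rotate_eq_self_iff, ← iterate_rotate_eq_self_iff,
      ← (hτ.iterate_right s).eq, τ.injective.eq_iff]
  exact Nat.succ_injective (Nat.dvd_antisymm ((hdvd _).2 dvd_rfl) ((hdvd _).1 dvd_rfl))

theorem fst_apply_eq_iff_of_semiconj {τ : Cycles κ ≃ Cycles κ'}
    (hτ : Function.Semiconj τ (rotate κ) (rotate κ')) {x y : Cycles κ} :
    (τ x).1 = (τ y).1 ↔ x.1 = y.1 := by
  constructor
  · intro h
    obtain ⟨s, hs⟩ := exists_iterate_rotate_eq h
    rw [← (hτ.iterate_right s).eq, τ.injective.eq_iff, iterate_rotate_apply] at hs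
    exact hs ▸ rfl
  · intro h
    obtain ⟨s, rfl⟩ := exists_iterate_rotate_eq h
    rw [(hτ.iterate_right s).eq, iterate_rotate_apply]

theorem exists_equiv_fst_apply_of_semiconj {τ : Cycles κ ≃ Cycles κ'}
    (hτ : Function.Semiconj τ (rotate κ) (rotate κ')) :
    ∃ π : I ≃ J, κ = κ' ∘ π ∧ ∀ i, (τ ⟨i, 0⟩).1 = π i := by
  refine ⟨.ofBijective (fun i ↦ (τ ⟨i, 0⟩).1) ⟨fun i j h ↦ ?_, fun j ↦ ?_⟩,
    funext fun i ↦ (length_apply_fst_of_semiconj hτ ⟨i, 0⟩).symm, fun _ ↦ rfl⟩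
  · exact (fst_apply_eq_iff_of_semiconj hτ).1 h
  · refine ⟨(τ.symm ⟨j, 0⟩).1, ?_⟩
    simpa using (fst_apply_eq_iff_of_semiconj hτ (x := ⟨(τ.symm ⟨j, 0⟩).1, 0⟩)
      (y := τ.symm ⟨j, 0⟩)).2 rfl

theorem eq_of_semiconj_of_apply_zero {τ τ' : Cycles κ ≃ Cycles κ'}
    (hτ : Function.Semiconj τ (rotate κ) (rotate κ'))
    (hτ' : Function.Semiconj τ' (rotate κ) (rotate κ'))
    (h : ∀ i, τ ⟨i, 0⟩ = τ' ⟨i, 0⟩) : τ = τ' := by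
  ext1 ⟨i, a⟩
  obtain ⟨s, hs⟩ := exists_iterate_rotate_eq (κ := κ) (x := ⟨i, 0⟩) (y := ⟨i, a⟩) rfl
  rw [← hs, (hτ.iterate_right s).eq, (hτ'.iterate_right s).eq, h]

theorem card_semiconj_rotate_le [Finite I] [Fintype J] (κ : I → ℕ) (κ' : J → ℕ) :
    Nat.card {τ : Cycles κ ≃ Cycles κ' // Function.Semiconj τ (rotate κ) (rotate κ')} ≤
      Nat.card {π : I ≃ J // κ = κ' ∘ π} * ∏ j, (κ' j + 1) := by
  classical
  have := Fintype.ofFinite I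
  have hbase (τ : {τ : Cycles κ ≃ Cycles κ' // Function.Semiconj τ (rotate κ) (rotate κ')}) :
      ∃ p : Σ π : {π : I ≃ J // κ = κ' ∘ π}, ∀ i, Fin (κ' (π.1 i) + 1),
        ∀ i, τ.1 ⟨i, 0⟩ = ⟨p.1.1 i, p.2 i⟩ := by
    obtain ⟨π, hπ, hfst⟩ := exists_equiv_fst_apply_of_semiconj τ.2
    choose b hb using fun i ↦ show ∃ b, τ.1 ⟨i, 0⟩ = ⟨π i, b⟩ from
      ⟨hfst i ▸ (τ.1 ⟨i, 0⟩).2, Sigma.ext (hfst i) (by simp)⟩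
    exact ⟨⟨⟨π, hπ⟩, b⟩, hb⟩
  choose p hp using hbase
  have hp_inj : Function.Injective p := fun τ τ' h ↦ Subtype.ext <|
    eq_of_semiconj_of_apply_zero τ.2 τ'.2 fun i ↦ by rw [hp, hp, h]
  refine (Nat.card_le_card_of_injective p hp_inj).trans_eq ?_
  have hfiber (π : {π : I ≃ J // κ = κ' ∘ π}) :
      Fintype.card (∀ i, Fin (κ' (π.1 i) + 1)) = ∏ j, (κ' j + 1) := by
    simpa using π.1.prod_comp fun j ↦ κ' j + 1
  rw [Nat.card_eq_fintype_card, Nat.card_eq_fintype_card, Fintype.card_sigma,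
    Finset.sum_congr rfl fun π _ ↦ hfiber π, Finset.sum_const, Finset.card_univ, smul_eq_mul]

end Cycles

section PowerSums

variable {R N I : Type*} [CommSemiring R] [Fintype N] [DecidableEq N] [Fintype I]

theorem sum_prod_path_mul (A B : Matrix N N R) (k : ℕ) :
    ∑ i : Fin (k + 1) → N, (∏ a : Fin k, A (i a.succ) (i a.castSucc)) * B (i 0) (i (Fin.last k)) =
      (A ^ k * B).trace := by
  induction k generalizing B with
  | zero =>
    simp only [Finset.univ_eq_empty, Finset.prod_empty, one_mul, pow_zero, Matrix.trace,
      Matrix.diag_apply]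
    exact Fintype.sum_equiv (Equiv.funUnique (Fin 1) N) _ _ fun _ ↦ rfl
  | succ k ih =>
    rw [pow_succ, Matrix.mul_assoc, ← ih, ← (Fin.consEquiv fun _ : Fin (k + 2) ↦ N).sum_comp,
      Fintype.sum_prod_type_right]
    refine Finset.sum_congr rfl fun j _ ↦ ?_
    rw [Matrix.mul_apply, Finset.mul_sum]
    refine Finset.sum_congr rfl fun x _ ↦ ?_
    rw [Fin.prod_univ_succ]
    simp only [Fin.consEquiv_apply, Fin.cons_succ, Fin.castSucc_zero, Fin.cons_zero,
      ← Fin.succ_castSucc, ← Fin.succ_last]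
    ring

theorem trace_pow_succ_eq_sum_prod (A : Matrix N N R) (k : ℕ) :
    (A ^ (k + 1)).trace = ∑ i : Fin (k + 1) → N, ∏ a, A (i (a + 1)) (i a) := by
  rw [pow_succ, ← sum_prod_path_mul]
  refine Finset.sum_congr rfl fun i _ ↦ ?_
  rw [Fin.prod_univ_castSucc]
  simp only [Fin.coeSucc_eq_succ, Fin.last_add_one]

theorem prod_trace_pow_eq_trace_permOp_rotate [DecidableEq I] (A : Matrix N N R) (κ : I → ℕ) :
    ∏ i, (A ^ (κ i + 1)).trace =
      (permOp R N (rotate κ) * tensorPow (Cycles κ) A).trace := by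
  simp only [trace_pow_succ_eq_sum_prod, trace_permOp_mul_tensorPow]
  rw [Finset.prod_univ_sum, Fintype.piFinset_univ]
  refine (Fintype.sum_equiv (Equiv.piCurry fun _ _ ↦ N) _ _ fun f ↦ ?_).symm
  exact Fintype.prod_sigma _

theorem trace_permOp_permCongr {ι ι' : Type*} [Fintype ι] [DecidableEq ι] [Fintype ι']
    [DecidableEq ι'] (e : ι ≃ ι') (σ : Perm ι) (A : Matrix N N R) :
    (permOp R N (e.permCongr σ) * tensorPow ι' A).trace =
      (permOp R N σ * tensorPow ι A).trace := by
  simp only [trace_permOp_mul_tensorPow]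
  refine Fintype.sum_equiv (e.symm.arrowCongr (Equiv.refl N)) _ _ fun f ↦ ?_
  refine Fintype.prod_equiv e.symm _ _ fun a ↦ ?_
  simp [Equiv.permCongr_apply]

theorem trace_permOp_conj {ι : Type*} [Fintype ι] [DecidableEq ι] (σ τ : Perm ι)
    (A : Matrix N N R) :
    (permOp R N (τ * σ * τ⁻¹) * tensorPow ι A).trace = (permOp R N σ * tensorPow ι A).trace :=
  trace_permOp_permCongr τ σ A

end PowerSums

section ClassAverage

variable {X G R : Type*} [Fintype X] [Group G] [Fintype G] [DecidableEq G]

/-- The average of `∑ x, a x • δ_{g x}` over conjugation by the elements of a finite group. -/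
def classAverage [DivisionRing R] (g : X → G) (a : X → R) (s : G) : R :=
  (Fintype.card G : R)⁻¹ * ∑ x, a x * Finset.card {h | h * g x * h⁻¹ = s}

theorem classAverage_conj [DivisionRing R] (g : X → G) (a : X → R) (s t : G) :
    classAverage g a (t * s * t⁻¹) = classAverage g a s := by
  have hcard (x : X) : Finset.card {h | h * g x * h⁻¹ = t * s * t⁻¹} =
      Finset.card {h | h * g x * h⁻¹ = s} := by
    refine Finset.card_equiv (Equiv.mulLeft t⁻¹) fun h ↦ ?_
    have hconj : t⁻¹ * h * g x * (t⁻¹ * h)⁻¹ = t⁻¹ * (h * g x * h⁻¹) * t := by group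
    simp only [Finset.mem_filter_univ, Equiv.coe_mulLeft, hconj]
    rw [eq_mul_inv_iff_mul_eq, ← inv_mul_eq_iff_eq_mul, ← mul_assoc]
  simp only [classAverage, hcard]

theorem sum_classAverage_mul [Field R] [CharZero R] (g : X → G) (a : X → R) {ψ : G → R}
    (hψ : ∀ s t, ψ (t * s * t⁻¹) = ψ s) :
    ∑ s, classAverage g a s * ψ s = ∑ x, a x * ψ (g x) := by
  have hsum (x : X) :
      ∑ s, (Finset.card {h | h * g x * h⁻¹ = s} : R) * ψ s = Fintype.card G * ψ (g x) := by
    simp only [Finset.natCast_card_filter, Finset.sum_mul, ite_mul, one_mul, zero_mul]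
    rw [Finset.sum_comm]
    simp [hψ]
  simp only [classAverage, mul_assoc (Fintype.card G : R)⁻¹, Finset.sum_mul, ← Finset.mul_sum]
  rw [Finset.sum_comm, inv_mul_eq_iff_eq_mul₀ (Nat.cast_ne_zero.2 Fintype.card_ne_zero),
    Finset.mul_sum]
  refine Finset.sum_congr rfl fun x _ ↦ ?_
  simp only [mul_assoc (a x), ← Finset.mul_sum]
  rw [hsum, mul_left_comm]

theorem card_mul_sum_norm_classAverage_sq_le (g : X → G) (a : X → ℂ) :
    Fintype.card G * ∑ s, ‖classAverage g a s‖ ^ 2 ≤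
      ∑ x, ∑ y, ‖a x‖ * ‖a y‖ * Finset.card {h | h * g y * h⁻¹ = g x} := by
  have hnorm (s : G) : ‖classAverage g a s‖ ≤ classAverage g (‖a ·‖) s := by
    rw [classAverage, norm_mul, norm_inv, Complex.norm_natCast]
    refine mul_le_mul_of_nonneg_left ((norm_sum_le _ _).trans_eq ?_) (by positivity)
    simp
  calc Fintype.card G * ∑ s, ‖classAverage g a s‖ ^ 2
      ≤ Fintype.card G * ∑ s, classAverage g (‖a ·‖) s * classAverage g (‖a ·‖) s := by
        gcongr with s
        rw [← sq]
        gcongr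
        exact hnorm s
    _ = ∑ x, ‖a x‖ * (Fintype.card G * classAverage g (‖a ·‖) (g x)) := by
        rw [sum_classAverage_mul g _ (classAverage_conj g _), Finset.mul_sum]
        exact Finset.sum_congr rfl fun x _ ↦ mul_left_comm _ _ _
    _ = _ := by
        refine Finset.sum_congr rfl fun x _ ↦ ?_
        rw [classAverage, mul_inv_cancel_left₀ (Nat.cast_ne_zero.2 Fintype.card_ne_zero),
          Finset.mul_sum]
        exact Finset.sum_congr rfl fun y _ ↦ (mul_assoc _ _ _).symm

end ClassAverage

section Family

variable {N : Type*} [Fintype N] [DecidableEq N] (μ : Measure (unitaryGroup N ℂ))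
  [IsProbabilityMeasure μ] [μ.IsMulLeftInvariant]

theorem integral_norm_sum_trace_permOp_sq_le {X ι : Type*} [Fintype X] [Fintype ι]
    [DecidableEq ι] (σ : X → Perm ι) (a : X → ℂ) :
    ∫ U : unitaryGroup N ℂ, ‖∑ x, a x * (permOp ℂ N (σ x) * tensorPow ι U.1).trace‖ ^ 2 ∂μ ≤
      ∑ x, ∑ y, ‖a x‖ * ‖a y‖ * Finset.card {τ | τ * σ y * τ⁻¹ = σ x} := by
  have h := integral_norm_trace_permOp_sq_le μ (classAverage_conj σ a)
  have hsum (U : unitaryGroup N ℂ) :=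
    sum_classAverage_mul σ a (ψ := fun s ↦ (permOp ℂ N s * tensorPow ι U.1).trace)
      fun s t ↦ trace_permOp_conj s t U.1
  simp only [hsum] at h
  rw [← Fintype.card_perm] at h
  exact h.trans (card_mul_sum_norm_classAverage_sq_le σ a)

theorem integral_norm_sum_trace_permOp_sq_le_of_equiv {X ι : Type*} [Fintype X] [Finite ι]
    {c : X → Type*} [∀ x, Fintype (c x)] [∀ x, DecidableEq (c x)] (e : ∀ x, c x ≃ ι)
    (σ : ∀ x, Perm (c x)) (a : X → ℂ) :
    ∫ U : unitaryGroup N ℂ, ‖∑ x, a x * (permOp ℂ N (σ x) * tensorPow (c x) U.1).trace‖ ^ 2 ∂μ ≤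
      ∑ x, ∑ y, ‖a x‖ * ‖a y‖ * Nat.card {τ : c y ≃ c x // Function.Semiconj τ (σ y) (σ x)} := by
  classical
  have := Fintype.ofFinite ι
  have h := integral_norm_sum_trace_permOp_sq_le μ (fun x ↦ (e x).permCongr (σ x)) a
  simp only [trace_permOp_permCongr] at h
  refine h.trans_eq (Finset.sum_congr rfl fun x _ ↦ Finset.sum_congr rfl fun y _ ↦ ?_)
  rw [← Fintype.card_subtype, ← Nat.card_eq_fintype_card]
  congr 2
  refine Nat.card_congr (((e y).equivCongr (e x)).symm.subtypeEquiv fun τ ↦ ?_)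
  rw [mul_inv_eq_iff_eq_mul, Equiv.ext_iff, ← (e y).forall_congr_right]
  simp [Function.Semiconj, Equiv.permCongr_apply, Equiv.equivCongr, Equiv.symm_apply_eq]

end Family

section Homogeneous

variable {N : Type*} [Fintype N] [DecidableEq N] {μ : Measure (unitaryGroup N ℂ)}

/-- `f` is homogeneous of degree `d` under multiplication by scalars of modulus one. -/
def IsHomogeneous (f : unitaryGroup N ℂ → ℂ) (d : ℕ) : Prop :=
  ∀ (c : unitary ℂ) (U : unitaryGroup N ℂ), f (c • U) = c ^ d * f U

theorem exists_unitary_pow_mul_conj_pow_eq_neg_one {d d' : ℕ} (hd : d ≠ d') :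
    ∃ c : unitary ℂ, (c : ℂ) ^ d * starRingEnd ℂ (c ^ d') = -1 := by
  have hsub : (d : ℂ) - d' ≠ 0 := sub_ne_zero.2 (Nat.cast_injective.ne hd)
  set w := Complex.exp (Real.pi / (d - d') * Complex.I) with hw
  have hconj : starRingEnd ℂ w = Complex.exp (-(Real.pi / (d - d') * Complex.I)) := by
    rw [hw, ← Complex.exp_conj]
    simp
  have hmem : starRingEnd ℂ w * w = 1 := by
    rw [hconj, hw, ← Complex.exp_add, neg_add_cancel, Complex.exp_zero]
  suffices w ^ d * starRingEnd ℂ (w ^ d') = -1 from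
    ⟨⟨w, Unitary.mem_iff_star_mul_self.2 hmem⟩, this⟩
  rw [map_pow, hconj, hw, ← Complex.exp_nat_mul, ← Complex.exp_nat_mul, ← Complex.exp_add,
    ← Complex.exp_pi_mul_I]
  congr 1
  field_simp
  ring

theorem IsHomogeneous.integral_mul_conj_eq_zero [μ.IsMulLeftInvariant]
    {f f' : unitaryGroup N ℂ → ℂ} {d d' : ℕ} (hf : IsHomogeneous f d) (hf' : IsHomogeneous f' d')
    (hd : d ≠ d') : ∫ U, f U * starRingEnd ℂ (f' U) ∂μ = 0 := by
  obtain ⟨c, hc⟩ := exists_unitary_pow_mul_conj_pow_eq_neg_one hd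
  have hsmul (U : unitaryGroup N ℂ) : c • (1 : unitaryGroup N ℂ) * U = c • U :=
    Subtype.ext (smul_one_mul c U.1)
  have hneg (U : unitaryGroup N ℂ) : f (c • (1 : unitaryGroup N ℂ) * U) *
      starRingEnd ℂ (f' (c • (1 : unitaryGroup N ℂ) * U)) = -(f U * starRingEnd ℂ (f' U)) := by
    rw [hsmul, hf, hf', map_mul, mul_mul_mul_comm, hc, neg_one_mul]
  have h := integral_mul_left_eq_self (μ := μ) (fun U ↦ f U * starRingEnd ℂ (f' U)) (c • 1)
  simp only [hneg, integral_neg] at h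
  exact self_eq_neg.1 h.symm

theorem integral_norm_sum_sq_of_isHomogeneous [IsFiniteMeasure μ] [μ.IsMulLeftInvariant]
    {F : ℕ → unitaryGroup N ℂ → ℂ} (hF : ∀ d, Continuous (F d))
    (hhom : ∀ d, IsHomogeneous (F d) d) (s : Finset ℕ) :
    ∫ U, ‖∑ d ∈ s, F d U‖ ^ 2 ∂μ = ∑ d ∈ s, ∫ U, ‖F d U‖ ^ 2 ∂μ := by
  have hintegrable (d d' : ℕ) : Integrable (fun U ↦ F d U * starRingEnd ℂ (F d' U)) μ :=
    integrable_of_continuous μ ((hF d).mul (Complex.continuous_conj.comp (hF d')))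
  apply Complex.ofReal_injective
  simp only [Complex.ofReal_sum, ← integral_complex_ofReal, Complex.ofReal_pow,
    ← Complex.mul_conj', map_sum, Finset.sum_mul_sum]
  rw [integral_finsetSum _ fun d _ ↦ integrable_finsetSum _ fun d' _ ↦ hintegrable d d']
  refine Finset.sum_congr rfl fun d hd ↦ ?_
  rw [integral_finsetSum _ fun d' _ ↦ hintegrable d d', Finset.sum_eq_single d]
  · exact fun d' _ hne ↦ (hhom d).integral_mul_conj_eq_zero (hhom d') hne.symm
  · exact fun hn ↦ absurd hd hn

end Homogeneous

section TraceMoments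

variable {N I : Type*} [Fintype N] [DecidableEq N] [Fintype I]

theorem isHomogeneous_prod_trace_pow (k : I → ℕ) :
    IsHomogeneous (fun U : unitaryGroup N ℂ ↦ ∏ i, (U.1 ^ k i).trace) (∑ i, k i) := fun c U ↦ by
  simp only [Unitary.coe_smul, smul_pow, trace_smul, Submonoid.smul_def, smul_eq_mul,
    Finset.prod_mul_distrib, Finset.prod_pow_eq_pow_sum]

theorem continuous_trace_pow (k : ℕ) :
    Continuous fun U : unitaryGroup N ℂ ↦ (U.1 ^ k).trace :=
  (continuous_subtype_val.pow k).matrix_trace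

theorem sum_card_perm_comp_eq_le (T : Finset (I → ℕ)) (κ : I → ℕ) :
    ∑ κ' : T, Nat.card {π : Perm I // κ'.1 = κ ∘ π} ≤ (Fintype.card I).factorial := by
  classical
  rw [← Nat.card_sigma, ← Fintype.card_perm, ← Nat.card_eq_fintype_card]
  refine Nat.card_le_card_of_injective (fun p ↦ p.2.1) fun ⟨κ₁, π₁, h₁⟩ ⟨κ₂, π₂, h₂⟩ hπ ↦ ?_
  obtain rfl : π₁ = π₂ := hπ
  obtain rfl : κ₁ = κ₂ := Subtype.ext (h₁.trans h₂.symm)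
  rfl

variable (μ : Measure (unitaryGroup N ℂ)) [IsProbabilityMeasure μ] [μ.IsMulLeftInvariant]

theorem integral_norm_sum_prod_trace_pow_sq_le {T : Finset (I → ℕ)} {d : ℕ}
    (hT : ∀ κ ∈ T, ∑ i, (κ i + 1) = d) (g : ℕ → ℂ) :
    ∫ U : unitaryGroup N ℂ, ‖∑ κ ∈ T, (∏ i, g (κ i)) * ∏ i, (U.1 ^ (κ i + 1)).trace‖ ^ 2 ∂μ ≤
      (Fintype.card I).factorial * ∑ κ ∈ T, ∏ i, (κ i + 1) * ‖g (κ i)‖ ^ 2 := by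
  classical
  have e (κ : T) : Cycles κ.1 ≃ Fin d :=
    Fintype.equivFinOfCardEq (by simpa [Cycles] using hT κ κ.2)
  have h := integral_norm_sum_trace_permOp_sq_le_of_equiv μ e (fun κ ↦ rotate κ.1)
    fun κ ↦ ∏ i, g (κ.1 i)
  simp only [← prod_trace_pow_eq_trace_permOp_rotate] at h
  have hterm (κ κ' : T) : (∏ i, ‖g (κ.1 i)‖) * (∏ i, ‖g (κ'.1 i)‖) *
      Nat.card {τ : Cycles κ'.1 ≃ Cycles κ.1 // Function.Semiconj τ (rotate κ'.1) (rotate κ.1)} ≤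
      Nat.card {π : Perm I // κ'.1 = κ.1 ∘ π} * ∏ i, ((κ.1 i + 1) * ‖g (κ.1 i)‖ ^ 2) := by
    have hcard := card_semiconj_rotate_le κ'.1 κ.1
    rcases isEmpty_or_nonempty {π : Perm I // κ'.1 = κ.1 ∘ π} with hempty | ⟨π, hπ⟩
    · simp_all
    · have hprod : ∏ i, ‖g (κ'.1 i)‖ = ∏ i, ‖g (κ.1 i)‖ := by
        simpa [hπ] using Equiv.prod_comp π fun i ↦ ‖g (κ.1 i)‖
      rw [hprod, Finset.prod_mul_distrib, Finset.prod_pow]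
      calc _ ≤ (∏ i, ‖g (κ.1 i)‖) * (∏ i, ‖g (κ.1 i)‖) *
            ((Nat.card {π : Perm I // κ'.1 = κ.1 ∘ π} * ∏ i, (κ.1 i + 1) : ℕ) : ℝ) := by gcongr
        _ = _ := by push_cast; ring
  simp only [← Finset.sum_coe_sort T, Finset.mul_sum]
  refine h.trans (Finset.sum_le_sum fun κ _ ↦ ?_)
  simp only [norm_prod]
  refine (Finset.sum_le_sum fun κ' _ ↦ hterm κ κ').trans ?_
  rw [← Finset.sum_mul]
  gcongr
  exact_mod_cast sum_card_perm_comp_eq_le T κ.1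

theorem integral_norm_sum_mul_trace_pow_le (s : Finset ℕ) (g : ℕ → ℂ) (m : ℕ) :
    ∫ U : unitaryGroup N ℂ, ‖∑ k ∈ s, g k * (U.1 ^ (k + 1)).trace‖ ^ (2 * m) ∂μ ≤
      m.factorial * (∑ k ∈ s, (k + 1) * ‖g k‖ ^ 2) ^ m := by
  set T := Fintype.piFinset fun _ : Fin m ↦ s
  set degree : (Fin m → ℕ) → ℕ := fun κ ↦ ∑ i, (κ i + 1)
  set F : ℕ → unitaryGroup N ℂ → ℂ := fun d U ↦
    ∑ κ ∈ T with degree κ = d, (∏ i, g (κ i)) * ∏ i, (U.1 ^ (κ i + 1)).trace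
  have hpow (U : unitaryGroup N ℂ) :
      (∑ k ∈ s, g k * (U.1 ^ (k + 1)).trace) ^ m = ∑ d ∈ T.image degree, F d U := by
    rw [Finset.sum_fiberwise_of_maps_to fun κ ↦ Finset.mem_image_of_mem degree, ← Fin.prod_const,
      Finset.prod_univ_sum]
    simp only [T, Finset.prod_mul_distrib]
  have hF (d : ℕ) : Continuous (F d) := continuous_finsetSum _ fun κ _ ↦
    continuous_const.mul (continuous_finsetProd _ fun i _ ↦ continuous_trace_pow _)
  have hhom (d : ℕ) : IsHomogeneous (F d) d := fun c U ↦ by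
    simp only [F, Finset.mul_sum]
    refine Finset.sum_congr rfl fun κ hκ ↦ ?_
    obtain rfl : degree κ = d := (Finset.mem_filter.1 hκ).2
    rw [mul_left_comm]
    exact congrArg _ (isHomogeneous_prod_trace_pow (fun i ↦ κ i + 1) c U)
  calc ∫ U : unitaryGroup N ℂ, ‖∑ k ∈ s, g k * (U.1 ^ (k + 1)).trace‖ ^ (2 * m) ∂μ
      = ∑ d ∈ T.image degree, ∫ U, ‖F d U‖ ^ 2 ∂μ := by
        rw [← integral_norm_sum_sq_of_isHomogeneous hF hhom]
        simp only [← hpow, norm_pow, ← pow_mul, mul_comm m]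
    _ ≤ ∑ d ∈ T.image degree, (m.factorial : ℝ) *
          ∑ κ ∈ T with degree κ = d, ∏ i, (κ i + 1) * ‖g (κ i)‖ ^ 2 := by
        refine Finset.sum_le_sum fun d _ ↦ ?_
        simpa only [Fintype.card_fin] using integral_norm_sum_prod_trace_pow_sq_le μ
          (T := T.filter (degree · = d)) (fun κ hκ ↦ (Finset.mem_filter.1 hκ).2) g
    _ = m.factorial * (∑ k ∈ s, (k + 1) * ‖g k‖ ^ 2) ^ m := by
        rw [← Finset.mul_sum, Finset.sum_fiberwise_of_maps_to fun κ ↦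
          Finset.mem_image_of_mem degree, ← Fin.prod_const, Finset.prod_univ_sum]

end TraceMoments

/-! ### Exponential moments of linear statistics -/

section ExponentialMoments

open Filter Topology

theorem ofReal_exp_mul_le_tsum (c y : ℝ) :
    ENNReal.ofReal (Real.exp (c * y)) ≤
      ∑' m : ℕ, ENNReal.ofReal (2 * c ^ (2 * m) / (2 * m).factorial) *
        ENNReal.ofReal (y ^ (2 * m)) := by
  have hterm (m : ℕ) : 2 * ((c * y) ^ (2 * m) / (2 * m).factorial) =
      2 * c ^ (2 * m) / (2 * m).factorial * y ^ (2 * m) := by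
    rw [mul_pow]
    ring
  have hcosh := (Real.hasSum_cosh (c * y)).mul_left 2
  simp only [hterm] at hcosh
  have heven (x : ℝ) (m : ℕ) : 0 ≤ x ^ (2 * m) := (even_two_mul m).pow_nonneg x
  have hcoeff (m : ℕ) : 0 ≤ 2 * c ^ (2 * m) / (2 * m).factorial :=
    div_nonneg (mul_nonneg zero_le_two (heven c m)) (Nat.cast_nonneg _)
  simp only [← ENNReal.ofReal_mul (hcoeff _)]
  rw [← ENNReal.ofReal_tsum_of_nonneg (fun m ↦ mul_nonneg (hcoeff m) (heven y m)) hcosh.summable,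
    hcosh.tsum_eq, Real.cosh_eq]
  gcongr
  linarith [Real.exp_pos (-(c * y))]

theorem tsum_ofReal_mul_factorial_mul_pow_le {v : ℝ} (hv : 0 ≤ v) (c : ℝ) :
    ∑' m : ℕ, ENNReal.ofReal (2 * c ^ (2 * m) / (2 * m).factorial) *
        ENNReal.ofReal (m.factorial * v ^ m) ≤ ENNReal.ofReal (2 * Real.exp (c ^ 2 * v)) := by
  have hexp : HasSum (fun m : ℕ ↦ 2 * ((c ^ 2 * v) ^ m / m.factorial))
      (2 * Real.exp (c ^ 2 * v)) := by
    rw [Real.exp_eq_exp_ℝ]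
    exact (NormedSpace.expSeries_div_hasSum_exp (c ^ 2 * v)).mul_left 2
  have hfac (m : ℕ) : (m.factorial : ℝ) * m.factorial ≤ (2 * m).factorial := by
    rw [two_mul]
    exact_mod_cast Nat.le_of_dvd (m + m).factorial_pos
      (Nat.factorial_mul_factorial_dvd_factorial_add m m)
  rw [← hexp.tsum_eq, ENNReal.ofReal_tsum_of_nonneg (fun m ↦ by positivity) hexp.summable]
  gcongr with m
  rw [← ENNReal.ofReal_mul' (by positivity)]
  refine ENNReal.ofReal_le_ofReal ?_
  calc 2 * c ^ (2 * m) / (2 * m).factorial * (m.factorial * v ^ m)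
      = 2 * (c ^ 2 * v) ^ m * (m.factorial / (2 * m).factorial) := by
        rw [mul_pow, pow_mul]
        ring
    _ ≤ 2 * (c ^ 2 * v) ^ m * (1 / m.factorial) := by
        refine mul_le_mul_of_nonneg_left ?_ (by positivity)
        rw [div_le_div_iff₀ (by positivity) (by positivity), one_mul]
        exact hfac m
    _ = 2 * ((c ^ 2 * v) ^ m / m.factorial) := by ring

theorem lintegral_exp_mul_le_of_moments {Ω : Type*} [MeasurableSpace Ω] {ν : Measure Ω}
    {Y : Ω → ℝ} (hY : AEMeasurable Y ν) {v : ℝ} (hv : 0 ≤ v)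
    (hmoment : ∀ m : ℕ, ∫⁻ ω, ENNReal.ofReal (Y ω ^ (2 * m)) ∂ν ≤
      ENNReal.ofReal (m.factorial * v ^ m)) (c : ℝ) :
    ∫⁻ ω, ENNReal.ofReal (Real.exp (c * Y ω)) ∂ν ≤
      ENNReal.ofReal (2 * Real.exp (c ^ 2 * v)) := by
  calc ∫⁻ ω, ENNReal.ofReal (Real.exp (c * Y ω)) ∂ν
      ≤ ∫⁻ ω, ∑' m : ℕ, ENNReal.ofReal (2 * c ^ (2 * m) / (2 * m).factorial) *
          ENNReal.ofReal (Y ω ^ (2 * m)) ∂ν :=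
        lintegral_mono fun ω ↦ ofReal_exp_mul_le_tsum c (Y ω)
    _ = ∑' m : ℕ, ENNReal.ofReal (2 * c ^ (2 * m) / (2 * m).factorial) *
          ∫⁻ ω, ENNReal.ofReal (Y ω ^ (2 * m)) ∂ν := by
        rw [lintegral_tsum fun m ↦ (hY.pow_const _).ennreal_ofReal.const_mul _]
        exact tsum_congr fun m ↦ lintegral_const_mul' _ _ ENNReal.ofReal_ne_top
    _ ≤ ∑' m : ℕ, ENNReal.ofReal (2 * c ^ (2 * m) / (2 * m).factorial) *
          ENNReal.ofReal (m.factorial * v ^ m) := by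
        gcongr with m
        exact hmoment m
    _ ≤ ENNReal.ofReal (2 * Real.exp (c ^ 2 * v)) := tsum_ofReal_mul_factorial_mul_pow_le hv c

variable {N : Type*} [Fintype N] [DecidableEq N]
  (μ : Measure (unitaryGroup N ℂ)) [IsProbabilityMeasure μ] [μ.IsMulLeftInvariant]

theorem lintegral_exp_mul_norm_sum_mul_trace_pow_le (s : Finset ℕ) (g : ℕ → ℂ) (c : ℝ) :
    ∫⁻ U : unitaryGroup N ℂ,
        ENNReal.ofReal (Real.exp (c * ‖∑ k ∈ s, g k * (U.1 ^ (k + 1)).trace‖)) ∂μ ≤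
      ENNReal.ofReal (2 * Real.exp (c ^ 2 * ∑ k ∈ s, (k + 1) * ‖g k‖ ^ 2)) := by
  have hcont : Continuous fun U : unitaryGroup N ℂ ↦ ‖∑ k ∈ s, g k * (U.1 ^ (k + 1)).trace‖ :=
    (continuous_finsetSum _ fun k _ ↦ (continuous_trace_pow _).const_mul (g k)).norm
  refine lintegral_exp_mul_le_of_moments hcont.aemeasurable (by positivity) (fun m ↦ ?_) c
  have hintegrable : Integrable (fun U : unitaryGroup N ℂ ↦
      ‖∑ k ∈ s, g k * (U.1 ^ (k + 1)).trace‖ ^ (2 * m)) μ :=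
    integrable_of_continuous μ (hcont.pow (2 * m))
  rw [← ofReal_integral_eq_lintegral_ofReal hintegrable (.of_forall fun U ↦ by positivity)]
  exact ENNReal.ofReal_le_ofReal (integral_norm_sum_mul_trace_pow_le μ s g m)

theorem lintegral_exp_mul_norm_le_of_hasSum {g : ℕ → ℂ} {Φ : unitaryGroup N ℂ → ℂ}
    (hΦ : ∀ U : unitaryGroup N ℂ, HasSum (fun k ↦ g k * (U.1 ^ (k + 1)).trace) (Φ U)) {v : ℝ}
    (hv : HasSum (fun k : ℕ ↦ (k + 1) * ‖g k‖ ^ 2) v) (c : ℝ) :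
    ∫⁻ U : unitaryGroup N ℂ, ENNReal.ofReal (Real.exp (c * ‖Φ U‖)) ∂μ ≤
      ENNReal.ofReal (2 * Real.exp (c ^ 2 * v)) := by
  set F : ℕ → unitaryGroup N ℂ → ENNReal := fun D U ↦
    ENNReal.ofReal (Real.exp (c * ‖∑ k ∈ Finset.range D, g k * (U.1 ^ (k + 1)).trace‖))
  have hF (D : ℕ) : Measurable (F D) := by
    have : Continuous (F D) := ENNReal.continuous_ofReal.comp <| Real.continuous_exp.comp <|
      ((continuous_finsetSum _ fun k _ ↦ (continuous_trace_pow _).const_mul (g k)).norm).const_mul c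
    exact this.measurable
  have hlim (U : unitaryGroup N ℂ) :
      Tendsto (F · U) atTop (𝓝 (ENNReal.ofReal (Real.exp (c * ‖Φ U‖)))) :=
    ENNReal.tendsto_ofReal (((hΦ U).tendsto_sum_nat.norm.const_mul c).rexp)
  calc ∫⁻ U, ENNReal.ofReal (Real.exp (c * ‖Φ U‖)) ∂μ
      = ∫⁻ U, liminf (F · U) atTop ∂μ := lintegral_congr fun U ↦ (hlim U).liminf_eq.symm
    _ ≤ liminf (fun D ↦ ∫⁻ U, F D U ∂μ) atTop := lintegral_liminf_le hF
    _ ≤ ENNReal.ofReal (2 * Real.exp (c ^ 2 * v)) := by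
        refine liminf_le_of_frequently_le' (.of_forall fun D ↦ ?_)
        refine (lintegral_exp_mul_norm_sum_mul_trace_pow_le μ _ g c).trans ?_
        gcongr
        exact sum_le_hasSum _ (fun k _ ↦ by positivity) hv

end ExponentialMoments

section Eigenvalues

open Polynomial

variable {N F : Type*} [Fintype N] [DecidableEq N] [Field F] [IsAlgClosed F] (A : Matrix N N F)

theorem card_roots_charpoly : A.charpoly.roots.card = Fintype.card N := by
  rw [← (IsAlgClosed.splits A.charpoly).natDegree_eq_card_roots, charpoly_natDegree_eq_dim]

theorem det_add_algebraMap (x : F) :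
    (A + algebraMap F (Matrix N N F) x).det = (A.charpoly.roots.map (· + x)).prod := by
  have hneg : A + algebraMap F (Matrix N N F) x = -(scalar N (-x) - A) := by
    rw [map_neg, neg_sub, sub_neg_eq_add]
    rfl
  rw [hneg, det_neg, ← eval_charpoly,
    (IsAlgClosed.splits A.charpoly).eval_eq_prod_roots_of_monic A.charpoly_monic,
    ← card_roots_charpoly A, ← Multiset.prod_replicate, ← Multiset.map_const', ←
    Multiset.prod_map_mul]
  simp [add_comm]

theorem det_aeval (p : F[X]) :
    (aeval A p).det = (A.charpoly.roots.map fun a ↦ p.eval a).prod := by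
  refine Submonoid.closure_induction ?_ ?_ ?_ (IsAlgClosed.splits p)
  · rintro _ (⟨x, rfl⟩ | ⟨x, rfl⟩)
    · simp [Algebra.algebraMap_eq_smul_one, card_roots_charpoly]
    · simp [det_add_algebraMap]
  · simp
  · intro p q _ _ hp hq
    simp only [map_mul, det_mul, hp, hq, eval_mul, Multiset.prod_map_mul]

theorem det_one_sub_smul (x : F) :
    (1 - x • A).det = (A.charpoly.roots.map fun a ↦ 1 - x * a).prod := by
  have h := det_aeval A (1 - C x * X)
  simp only [map_sub, map_one, map_mul, aeval_C, aeval_X, ← Algebra.smul_def] at h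
  simpa using h

theorem roots_charpoly_aeval (p : F[X]) :
    (aeval A p).charpoly.roots = A.charpoly.roots.map fun a ↦ p.eval a := by
  have h : (aeval A p).charpoly = ((A.charpoly.roots.map fun a ↦ p.eval a).map (X - C ·)).prod := by
    refine Polynomial.funext fun x ↦ ?_
    have := det_aeval A (C x - p)
    rw [eval_charpoly, eval_multiset_prod, Multiset.map_map, Multiset.map_map]
    simpa [Algebra.algebraMap_eq_smul_one, ← smul_one_eq_diagonal] using this
  rw [h, roots_multiset_prod_X_sub_C]

theorem trace_pow_eq_sum_roots (k : ℕ) :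
    (A ^ k).trace = (A.charpoly.roots.map (· ^ k)).sum := by
  have h := roots_charpoly_aeval A (X ^ k)
  simp only [map_pow, aeval_X, eval_pow, eval_X] at h
  rw [trace_eq_sum_roots_charpoly, h]

open scoped Matrix.Norms.L2Operator in
theorem norm_eq_one_of_mem_roots_charpoly {A : Matrix N N ℂ} (hA : A ∈ unitaryGroup N ℂ) {a : ℂ}
    (ha : a ∈ A.charpoly.roots) : ‖a‖ = 1 := by
  have hspec : a ∈ spectrum ℂ A := mem_spectrum_iff_isRoot_charpoly.mpr (isRoot_of_mem_roots ha)
  simpa using spectrum.subset_circle_of_unitary (𝕜 := ℂ) hA hspec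

end Eigenvalues

section ResolventTrace

variable {N : Type*} [Fintype N] [DecidableEq N]

/-- The linear statistic `∑ a / (1 - r a)`, over the eigenvalues `a` of `A` with multiplicity; it
is the trace of `A (1 - r A)⁻¹` when that inverse exists. -/
noncomputable def resolventTrace (r : ℝ) (A : Matrix N N ℂ) : ℂ :=
  (A.charpoly.roots.map fun a ↦ a / (1 - (r : ℂ) * a)).sum

theorem hasSum_multiset_sum_map {α β E : Type*} [AddCommMonoid E] [TopologicalSpace E]
    [ContinuousAdd E] {f : α → β → E} {x : α → E} {s : Multiset α}
    (h : ∀ a ∈ s, HasSum (f a) (x a)) :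
    HasSum (fun b ↦ (s.map (f · b)).sum) (s.map x).sum := by
  induction s using Multiset.induction_on with
  | empty => simp
  | cons a s ih =>
    simp only [Multiset.map_cons, Multiset.sum_cons]
    exact (h a (s.mem_cons_self a)).add (ih fun b hb ↦ h b (Multiset.mem_cons_of_mem hb))

theorem hasSum_resolventTrace {A : Matrix N N ℂ} (hA : A ∈ unitaryGroup N ℂ) {r : ℝ}
    (hr : |r| < 1) :
    HasSum (fun k ↦ (r : ℂ) ^ k * (A ^ (k + 1)).trace) (resolventTrace r A) := by
  simp only [trace_pow_eq_sum_roots, ← Multiset.sum_map_mul_left]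
  refine hasSum_multiset_sum_map (f := fun a k ↦ (r : ℂ) ^ k * a ^ (k + 1)) fun a ha ↦ ?_
  have hnorm : ‖(r : ℂ) * a‖ < 1 := by
    rwa [norm_mul, norm_eq_one_of_mem_roots_charpoly hA ha, mul_one, Complex.norm_real]
  have hterm (k : ℕ) : (r : ℂ) ^ k * a ^ (k + 1) = a * (r * a) ^ k := by ring
  simpa only [hterm, div_eq_mul_inv] using (hasSum_geometric_of_norm_lt_one hnorm).mul_left a

theorem hasSum_star_resolventTrace_star (U : unitaryGroup N ℂ) {r : ℝ} (hr : |r| < 1) :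
    HasSum (fun k ↦ (r : ℂ) ^ k * (U.1 ^ (k + 1)).trace) (star (resolventTrace r (star U.1))) := by
  have hterm (k : ℕ) : (r : ℂ) ^ k * (U.1 ^ (k + 1)).trace =
      star ((r : ℂ) ^ k * (star U.1 ^ (k + 1)).trace) := by
    rw [star_mul', star_pow, ← trace_conjTranspose, conjTranspose_pow, ← star_eq_conjTranspose,
      star_star, Complex.star_def, Complex.conj_ofReal]
  simpa only [hterm] using (hasSum_resolventTrace (Unitary.star_mem U.2) hr).star

theorem lintegral_exp_mul_norm_resolventTrace_le (μ : Measure (unitaryGroup N ℂ))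
    [IsProbabilityMeasure μ] [μ.IsMulLeftInvariant] {r : ℝ} (hr : |r| < 1) (c : ℝ) :
    ∫⁻ U : unitaryGroup N ℂ, ENNReal.ofReal (Real.exp (c * ‖resolventTrace r (star U.1)‖)) ∂μ ≤
      ENNReal.ofReal (2 * Real.exp (c ^ 2 * (1 / (1 - r ^ 2) ^ 2))) := by
  have hr2 : ‖r ^ 2‖ < 1 := by simpa [Real.norm_eq_abs] using hr
  have hv : HasSum (fun k : ℕ ↦ ((k : ℝ) + 1) * ‖(r : ℂ) ^ k‖ ^ 2) (1 / (1 - r ^ 2) ^ 2) := by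
    have hterm (k : ℕ) : ((k : ℝ) + 1) * ‖(r : ℂ) ^ k‖ ^ 2 = (k + 1).choose 1 * (r ^ 2) ^ k := by
      rw [norm_pow, Complex.norm_real, pow_right_comm, Real.norm_eq_abs, sq_abs,
        Nat.choose_one_right, Nat.cast_succ]
    simpa only [hterm] using hasSum_choose_mul_geometric_of_norm_lt_one 1 hr2
  simpa only [norm_star] using lintegral_exp_mul_norm_le_of_hasSum μ
    (hasSum_star_resolventTrace_star · hr) hv c

end ResolventTrace

/-! ### The deterministic bound -/

section DeterministicBound

theorem norm_one_add_le_exp (w : ℂ) : ‖1 + w‖ ≤ Real.exp (w.re + ‖w‖ ^ 2 / 2) := by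
  have hsq : ‖1 + w‖ ^ 2 = 2 * w.re + ‖w‖ ^ 2 + 1 := by
    simp only [Complex.sq_norm, Complex.normSq_apply, Complex.add_re, Complex.add_im,
      Complex.one_re, Complex.one_im]
    ring
  refine (sq_le_sq₀ (norm_nonneg _) (Real.exp_pos _).le).mp ?_
  rw [hsq, ← Real.exp_nat_mul]
  rw [Nat.cast_ofNat, mul_add, mul_div_cancel₀ _ two_ne_zero]
  exact Real.add_one_le_exp _

theorem one_sub_norm_sq_div_norm_one_sub_sq {w : ℂ} (hw : w ≠ 1) :
    (1 - ‖w‖ ^ 2) / ‖1 - w‖ ^ 2 = 1 + 2 * (w / (1 - w)).re := by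
  have hne : 1 - w ≠ 0 := sub_ne_zero.mpr hw.symm
  have hkernel := congrFun (poissonKernel_eq_re_herglotzRieszKernel (c := 0) (w := w)) 1
  have hcayley : (1 + w) / (1 - w) = 1 + (2 : ℝ) * (w / (1 - w)) := by
    field_simp
    push_cast
    ring
  simpa [poissonKernel_def, herglotzRieszKernel_def, hcayley] using hkernel

theorem norm_le_one_add_div_mul_norm {E : Type*} [SeminormedAddCommGroup E] {x y : E} {ε η : ℝ}
    (hη : 0 < η) (hx : η ≤ ‖x‖) (hxy : ‖y - x‖ ≤ ε) : ‖y‖ ≤ (1 + ε / η) * ‖x‖ := by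
  have hε : 0 ≤ ε := (norm_nonneg _).trans hxy
  calc ‖y‖ ≤ ‖x‖ + ‖y - x‖ := norm_le_norm_add_norm_sub' y x
    _ ≤ ‖x‖ + ε / η * η := by rwa [div_mul_cancel₀ _ hη.ne', add_le_add_iff_left]
    _ ≤ ‖x‖ + ε / η * ‖x‖ := by gcongr
    _ = (1 + ε / η) * ‖x‖ := by ring

theorem norm_div_le_exp {x x' y : ℂ} {ε η : ℝ} (hη : 0 < η) (hx : η ≤ ‖x‖) (hy : y ≠ 0)
    (hxx' : ‖x' - x‖ ≤ ε) (hxy : ‖y - x‖ ≤ ε) :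
    ‖x' / x‖ ≤ Real.exp (((x' - x) / y).re + 2 * (ε * (1 + ε / η)) ^ 2 * (‖y‖ ^ 2)⁻¹) := by
  have hε : 0 ≤ ε := (norm_nonneg _).trans hxy
  have hx0 : 0 < ‖x‖ := hη.trans_le hx
  have hxne : x ≠ 0 := norm_pos_iff.mp hx0
  set L := 1 + ε / η
  have hL : 1 ≤ L := le_add_of_nonneg_right (by positivity)
  have hinv : ‖x‖⁻¹ ≤ L * ‖y‖⁻¹ := by
    rw [← div_eq_mul_inv, inv_eq_one_div, div_le_div_iff₀ hx0 (norm_pos_iff.mpr hy), one_mul]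
    exact norm_le_one_add_div_mul_norm hη hx hxy
  set w := (x' - x) / x
  have hratio : x' / x = 1 + w := by simp [w, sub_div, hxne]
  have hsplit : w = (x' - x) / y + (x' - x) * (y - x) / (x * y) := by
    simp only [w]
    field_simp
    ring
  have hw : ‖w‖ ≤ ε * (L * ‖y‖⁻¹) := by
    rw [norm_div, div_eq_mul_inv]
    gcongr
  have hre : w.re ≤ ((x' - x) / y).re + ε * ε * (L * ‖y‖⁻¹ * ‖y‖⁻¹) := by
    rw [hsplit, Complex.add_re]
    gcongr
    refine (Complex.re_le_norm _).trans ?_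
    rw [norm_div, norm_mul, norm_mul, div_eq_mul_inv, mul_inv]
    gcongr
  rw [hratio]
  refine (norm_one_add_le_exp w).trans (Real.exp_le_exp.mpr ?_)
  have hLL : L ≤ L ^ 2 := le_self_pow₀ hL two_ne_zero
  calc w.re + ‖w‖ ^ 2 / 2
      ≤ ((x' - x) / y).re + ε * ε * (L * ‖y‖⁻¹ * ‖y‖⁻¹) + (ε * (L * ‖y‖⁻¹)) ^ 2 / 2 := by gcongr
    _ = ((x' - x) / y).re + (L + L ^ 2 / 2) * (ε ^ 2 * ‖y‖⁻¹ ^ 2) := by ring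
    _ ≤ ((x' - x) / y).re + 2 * L ^ 2 * (ε ^ 2 * ‖y‖⁻¹ ^ 2) := by
      gcongr
      linarith [sq_nonneg L]
    _ = _ := by
      rw [inv_pow]
      ring

theorem re_multiset_sum_map {α : Type*} (s : Multiset α) (f : α → ℂ) :
    (s.map f).sum.re = (s.map fun a ↦ (f a).re).sum := by
  rw [← Complex.coe_reAddGroupHom, map_multiset_sum, Multiset.map_map]
  rfl

theorem norm_multiset_prod_map_div_le_exp {α : Type*} {s : Multiset α} {f f' : α → ℂ} {g : α → ℝ}
    (h : ∀ a ∈ s, ‖f' a / f a‖ ≤ Real.exp (g a)) :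
    ‖(s.map f').prod / (s.map f).prod‖ ≤ Real.exp (s.map g).sum := by
  rw [← Multiset.prod_map_div]
  induction s using Multiset.induction_on with
  | empty => simp
  | cons a s ih =>
    simp only [Multiset.map_cons, Multiset.prod_cons, Multiset.sum_cons, Real.exp_add, norm_mul]
    gcongr
    · exact h a (s.mem_cons_self a)
    · exact ih fun b hb ↦ h b (Multiset.mem_cons_of_mem hb)

variable {N : Type*} [Fintype N] [DecidableEq N] {A : Matrix N N ℂ} {r : ℝ}

theorem ofReal_mul_ne_one_of_mem_roots_charpoly (hA : A ∈ unitaryGroup N ℂ) (hr : |r| < 1) {a : ℂ}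
    (ha : a ∈ A.charpoly.roots) : (r : ℂ) * a ≠ 1 := fun h ↦ hr.ne <| by
  simpa [norm_eq_one_of_mem_roots_charpoly hA ha] using congrArg norm h

theorem sum_map_inv_norm_one_sub_sq (hA : A ∈ unitaryGroup N ℂ) (hr : |r| < 1) :
    (A.charpoly.roots.map fun a ↦ (‖1 - (r : ℂ) * a‖ ^ 2)⁻¹).sum =
      (Fintype.card N + 2 * r * (resolventTrace r A).re) / (1 - r ^ 2) := by
  have hr2 : 1 - r ^ 2 ≠ 0 := (sub_pos.mpr ((sq_lt_one_iff_abs_lt_one r).mpr hr)).ne'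
  have hpoisson : ∀ a ∈ A.charpoly.roots, (‖1 - (r : ℂ) * a‖ ^ 2)⁻¹ =
      (1 + 2 * r * (a / (1 - (r : ℂ) * a)).re) / (1 - r ^ 2) := fun a ha ↦ by
    have h := one_sub_norm_sq_div_norm_one_sub_sq (ofReal_mul_ne_one_of_mem_roots_charpoly hA hr ha)
    rw [norm_mul, norm_eq_one_of_mem_roots_charpoly hA ha, Complex.norm_real, mul_one,
      Real.norm_eq_abs, sq_abs, mul_div_assoc, Complex.re_ofReal_mul, ← mul_assoc] at h
    rw [← h, div_right_comm, div_self hr2, one_div]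
  rw [Multiset.map_congr rfl hpoisson, Multiset.sum_map_div, Multiset.sum_map_add,
    Multiset.sum_map_mul_left, Multiset.map_const', Multiset.sum_replicate, card_roots_charpoly,
    nsmul_one, resolventTrace, re_multiset_sum_map]

theorem norm_det_div_det_le_exp (hA : A ∈ unitaryGroup N ℂ) (hr : |r| < 1) {ε η : ℝ} (hη : 0 < η)
    {X X' : ℂ} (hX : η ≤ |‖X‖ - 1|) (hXX' : ‖X - X'‖ ≤ ε) (hXr : ‖X - r‖ ≤ ε) :
    ‖(1 - X' • A).det / (1 - X • A).det‖ ≤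
      Real.exp (((X - X') * resolventTrace r A).re + 2 * (ε * (1 + ε / η)) ^ 2 *
        ((Fintype.card N + 2 * r * (resolventTrace r A).re) / (1 - r ^ 2))) := by
  have hfactor : ∀ a ∈ A.charpoly.roots, ‖(1 - X' * a) / (1 - X * a)‖ ≤
      Real.exp (((X - X') * (a / (1 - r * a))).re +
        2 * (ε * (1 + ε / η)) ^ 2 * (‖1 - r * a‖ ^ 2)⁻¹) := fun a ha ↦ by
    have ha1 := norm_eq_one_of_mem_roots_charpoly hA ha
    have hdist (Y : ℂ) : ‖(1 - Y * a) - (1 - X * a)‖ = ‖X - Y‖ := by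
      rw [sub_sub_sub_cancel_left, ← sub_mul, norm_mul, ha1, mul_one]
    have hlow : η ≤ ‖1 - X * a‖ := by
      have h := abs_norm_sub_norm_le (X * a) 1
      rw [norm_mul, ha1, mul_one, norm_one, norm_sub_rev] at h
      exact hX.trans h
    have hne := sub_ne_zero.mpr (ofReal_mul_ne_one_of_mem_roots_charpoly hA hr ha).symm
    have h := norm_div_le_exp hη hlow hne ((hdist X').trans_le hXX') ((hdist r).trans_le hXr)
    rwa [sub_sub_sub_cancel_left, ← sub_mul, mul_div_assoc] at h
  rw [det_one_sub_smul, det_one_sub_smul]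
  refine (norm_multiset_prod_map_div_le_exp hfactor).trans_eq ?_
  rw [Multiset.sum_map_add, Multiset.sum_map_mul_left, sum_map_inv_norm_one_sub_sq hA hr,
    resolventTrace, ← Multiset.sum_map_mul_left, re_multiset_sum_map, re_multiset_sum_map]

end DeterministicBound

section Rescaling

/-- The centre `n / (n + 1)` of the expansion in dimension `n`: it lies inside the unit disc, at
distance of order `1 / n` both from the unit circle and from the points `exp (2πiz / n)`. -/
noncomputable def radius (n : ℕ) : ℝ := n / (n + 1)

theorem one_sub_radius (n : ℕ) : 1 - radius n = 1 / (n + 1) := by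
  rw [radius, eq_div_iff n.cast_add_one_ne_zero, sub_mul, div_mul_cancel₀ _ n.cast_add_one_ne_zero]
  ring

theorem abs_radius_lt_one (n : ℕ) : |radius n| < 1 := by
  rw [radius, abs_of_nonneg (by positivity), div_lt_one (by positivity)]
  exact lt_add_one _

theorem inv_one_sub_radius_sq_pos (n : ℕ) : 0 < (1 - radius n ^ 2)⁻¹ :=
  inv_pos.mpr (sub_pos.mpr ((sq_lt_one_iff_abs_lt_one _).mpr (abs_radius_lt_one n)))

theorem inv_one_sub_radius_sq_le {n : ℕ} (hn : 1 ≤ n) : (1 - radius n ^ 2)⁻¹ ≤ (2 * n : ℝ) := by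
  have hn' : (1 : ℝ) ≤ n := mod_cast hn
  have h : 1 - radius n ^ 2 = (2 * n + 1) / (n + 1) ^ 2 := by
    rw [radius]
    field_simp
    ring
  rw [h, inv_div, div_le_iff₀ (by positivity)]
  nlinarith

theorem norm_det_div_det_le_exp_of_scaled {n : ℕ} (hn : 1 ≤ n) {A : Matrix (Fin n) (Fin n) ℂ}
    (hA : A ∈ unitaryGroup (Fin n) ℂ) {B c : ℝ} (hc : 0 < c) {X X' : ℂ}
    (hX : c / n ≤ |‖X‖ - 1|) (hXX' : ‖X - X'‖ ≤ B / n) (hXr : ‖X - radius n‖ ≤ B / n) :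
    ‖(1 - X' • A).det / (1 - X • A).det‖ ≤ Real.exp ((B + 8 * (B * (1 + B / c)) ^ 2) *
      (1 + ‖resolventTrace (radius n) A‖ / n)) := by
  have hn0 : (0 : ℝ) < n := mod_cast hn
  have hB : 0 ≤ B := by
    simpa [div_mul_cancel₀ _ hn0.ne'] using mul_nonneg ((norm_nonneg _).trans hXX') hn0.le
  refine (norm_det_div_det_le_exp hA (abs_radius_lt_one n) (div_pos hc hn0) hX hXX' hXr).trans
    (Real.exp_le_exp.mpr ?_)
  rw [Fintype.card_fin, div_div_div_cancel_right₀ hn0.ne']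
  set Φ := resolventTrace (radius n) A
  set D := B * (1 + B / c)
  have hlinear : ((X - X') * Φ).re ≤ B / n * ‖Φ‖ :=
    (Complex.re_le_norm _).trans (by rw [norm_mul]; gcongr)
  have hre : radius n * Φ.re ≤ ‖Φ‖ :=
    calc radius n * Φ.re ≤ |radius n| * |Φ.re| := (le_abs_self _).trans_eq (abs_mul _ _)
      _ ≤ 1 * ‖Φ‖ := by
        gcongr
        exacts [(abs_radius_lt_one n).le, Complex.abs_re_le_norm Φ]
      _ = ‖Φ‖ := one_mul _
  have hquadratic : (n + 2 * radius n * Φ.re) / (1 - radius n ^ 2) ≤ (n + 2 * ‖Φ‖) * (2 * n) := by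
    rw [div_eq_mul_inv, mul_assoc 2]
    have := inv_one_sub_radius_sq_pos n
    gcongr
    exact inv_one_sub_radius_sq_le hn
  calc ((X - X') * Φ).re + 2 * (B / n * (1 + B / c)) ^ 2 *
        ((n + 2 * radius n * Φ.re) / (1 - radius n ^ 2))
      ≤ B / n * ‖Φ‖ + 2 * (B / n * (1 + B / c)) ^ 2 * ((n + 2 * ‖Φ‖) * (2 * n)) := by gcongr
    _ = B * (‖Φ‖ / n) + 4 * D ^ 2 * (1 + 2 * (‖Φ‖ / n)) := by
      simp only [D]
      field_simp
      ring
    _ ≤ (B + 8 * D ^ 2) * (1 + ‖Φ‖ / n) := by nlinarith [sq_nonneg D]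

theorem div_one_add_le_abs_exp_sub_one {u y : ℝ} (hu : 0 ≤ u) (hy : u ≤ |y|) :
    u / (1 + u) ≤ |Real.exp y - 1| := by
  rw [div_le_iff₀ (by positivity)]
  rcases le_total 0 y with h | h
  · rw [abs_of_nonneg h] at hy
    have hexp : u ≤ Real.exp y - 1 := hy.trans (le_sub_iff_add_le.mpr (Real.add_one_le_exp y))
    rw [abs_of_nonneg (hu.trans hexp)]
    nlinarith
  · rw [abs_of_nonpos h] at hy
    have hexp : Real.exp y * (1 + u) ≤ 1 :=
      calc Real.exp y * (1 + u) ≤ Real.exp y * Real.exp (-y) := by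
            gcongr
            linarith [Real.add_one_le_exp (-y)]
        _ = 1 := by rw [← Real.exp_add, add_neg_cancel, Real.exp_zero]
    rw [abs_of_nonpos (sub_nonpos.mpr (Real.exp_le_one_iff.mpr h))]
    linarith

theorem norm_exp_div_natCast_sub_one_le {w : ℂ} {R : ℝ} (hw : ‖w‖ ≤ R) {n : ℕ} (hn : 1 ≤ n) :
    ‖Complex.exp (w / n) - 1‖ ≤ R * Real.exp R / n := by
  have hn' : (1 : ℝ) ≤ n := mod_cast hn
  have hdiv : ‖w / n‖ ≤ R / n := by
    rw [norm_div, Complex.norm_natCast]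
    gcongr
  have hR : 0 ≤ R := (norm_nonneg w).trans hw
  calc ‖Complex.exp (w / n) - 1‖ ≤ ‖w / n‖ * Real.exp ‖w / n‖ := by
        simpa using Complex.norm_exp_sub_sum_le_norm_mul_exp (w / n) 1
    _ ≤ R / n * Real.exp R := by
        gcongr
        exact hdiv.trans (div_le_self hR hn')
    _ = R * Real.exp R / n := by ring

theorem div_natCast_le_abs_norm_exp_sub_one {w : ℂ} {u : ℝ} (hu : 0 ≤ u) (hw : u ≤ |w.re|)
    {n : ℕ} (hn : 1 ≤ n) : u / (1 + u) / n ≤ |‖Complex.exp (w / n)‖ - 1| := by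
  rw [Complex.norm_exp, Complex.div_natCast_re]
  calc u / (1 + u) / n ≤ u / n / (1 + u / n) := by
        rw [div_right_comm]
        gcongr
        exact div_le_self hu (mod_cast hn)
    _ ≤ |Real.exp (w.re / n) - 1| := div_one_add_le_abs_exp_sub_one (by positivity) <| by
        rw [abs_div, Nat.abs_cast]
        gcongr

theorem norm_exp_div_natCast_sub_radius_le {w : ℂ} {R : ℝ} (hw : ‖w‖ ≤ R) {n : ℕ} (hn : 1 ≤ n) :
    ‖Complex.exp (w / n) - radius n‖ ≤ (R * Real.exp R + 1) / n := by
  have : (0 : ℝ) < n := mod_cast hn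
  have hcentre : ‖(1 : ℂ) - radius n‖ ≤ 1 / n := by
    rw [← Complex.ofReal_one, ← Complex.ofReal_sub, Complex.norm_real, one_sub_radius,
      Real.norm_of_nonneg (by positivity)]
    gcongr
    exact (lt_add_one _).le
  rw [add_div]
  exact (norm_sub_le_norm_sub_add_norm_sub _ 1 _).trans
    (add_le_add (norm_exp_div_natCast_sub_one_le hw hn) hcentre)

theorem exists_forall_norm_det_div_det_le_exp (R : ℝ) {u : ℝ} (hu : 0 < u) :
    ∃ C : ℝ, ∀ {n : ℕ}, 1 ≤ n → ∀ {A}, A ∈ unitaryGroup (Fin n) ℂ → ∀ {w w' : ℂ},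
      ‖w‖ ≤ R → ‖w'‖ ≤ R → u ≤ |w.re| →
      ‖(1 - Complex.exp (w' / n) • A).det / (1 - Complex.exp (w / n) • A).det‖ ≤
        Real.exp (C * (1 + ‖resolventTrace (radius n) A‖ / n)) := by
  refine ⟨_, fun {n} hn A hA w w' hw hw' hre ↦ norm_det_div_det_le_exp_of_scaled hn hA
    (B := 2 * (R * Real.exp R) + 1) (c := u / (1 + u)) (by positivity)
    (div_natCast_le_abs_norm_exp_sub_one hu.le hre hn) ?_ ?_⟩
  · calc ‖Complex.exp (w / n) - Complex.exp (w' / n)‖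
        ≤ ‖Complex.exp (w / n) - 1‖ + ‖Complex.exp (w' / n) - 1‖ := by
          rw [norm_sub_rev (Complex.exp (w' / n))]
          exact norm_sub_le_norm_sub_add_norm_sub _ 1 _
      _ ≤ R * Real.exp R / n + R * Real.exp R / n :=
        add_le_add (norm_exp_div_natCast_sub_one_le hw hn) (norm_exp_div_natCast_sub_one_le hw' hn)
      _ ≤ (2 * (R * Real.exp R) + 1) / n := by
        rw [← add_div, ← two_mul]
        gcongr
        exact (lt_add_one _).le
  · have hR : 0 ≤ R := (norm_nonneg w).trans hw
    refine (norm_exp_div_natCast_sub_radius_le hw hn).trans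
      (div_le_div_of_nonneg_right ?_ n.cast_nonneg)
    linarith [mul_nonneg hR (Real.exp_pos R).le]

theorem lintegral_exp_mul_one_add_norm_resolventTrace_le {n : ℕ} (hn : 1 ≤ n)
    (μ : Measure (unitaryGroup (Fin n) ℂ)) [IsProbabilityMeasure μ] [μ.IsMulLeftInvariant]
    (C : ℝ) :
    ∫⁻ U : unitaryGroup (Fin n) ℂ,
        ENNReal.ofReal (Real.exp (C * (1 + ‖resolventTrace (radius n) (star U.1)‖ / n))) ∂μ ≤
      ENNReal.ofReal (Real.exp C * (2 * Real.exp (4 * C ^ 2))) := by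
  have : (0 : ℝ) < n := mod_cast hn
  have hvariance : (C / n) ^ 2 * (1 / (1 - radius n ^ 2) ^ 2) ≤ 4 * C ^ 2 :=
    calc (C / n) ^ 2 * (1 / (1 - radius n ^ 2) ^ 2)
        = (C / n) ^ 2 * (1 - radius n ^ 2)⁻¹ ^ 2 := by rw [one_div, inv_pow]
      _ ≤ (C / n) ^ 2 * (2 * n) ^ 2 := by
        have := inv_one_sub_radius_sq_pos n
        gcongr
        exact inv_one_sub_radius_sq_le hn
      _ = 4 * C ^ 2 := by
        field_simp
        ring
  have hsplit (t : ℝ) : ENNReal.ofReal (Real.exp (C * (1 + t / n))) =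
      ENNReal.ofReal (Real.exp C) * ENNReal.ofReal (Real.exp (C / n * t)) := by
    rw [← ENNReal.ofReal_mul (Real.exp_pos _).le, ← Real.exp_add]
    congr 2
    ring
  simp only [hsplit]
  rw [lintegral_const_mul' _ _ ENNReal.ofReal_ne_top, ENNReal.ofReal_mul (Real.exp_pos _).le]
  gcongr
  refine (lintegral_exp_mul_norm_resolventTrace_le μ (abs_radius_lt_one n) _).trans ?_
  gcongr

theorem exists_pos_forall_le_abs_im {K : Set ℂ} (hK : IsCompact K) (hKR : ∀ z ∈ K, z.im ≠ 0) :
    ∃ δ > 0, ∀ z ∈ K, δ ≤ |z.im| := by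
  rcases K.eq_empty_or_nonempty with rfl | hne
  · exact ⟨1, one_pos, by simp⟩
  · obtain ⟨z₀, hz₀, hmin⟩ := hK.exists_isMinOn hne Complex.continuous_im.abs.continuousOn
    exact ⟨|z₀.im|, abs_pos.mpr (hKR z₀ hz₀), fun z hz ↦ hmin hz⟩

end Rescaling

end HaarRatio

theorem stmt_11_general {p : ℝ} (hp : 0 ≤ p) {K K' : Set ℂ} (hK : Bornology.IsBounded K)
    (hK' : Bornology.IsBounded K') {δ : ℝ} (hδ : 0 < δ) (hKδ : ∀ z ∈ K, δ ≤ |z.im|)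
    (μ : (n : ℕ) → Measure (Matrix.unitaryGroup (Fin n) ℂ))
    [∀ n, IsProbabilityMeasure (μ n)] [∀ n, (μ n).IsMulLeftInvariant] :
    (⨆ (n : ℕ) (_ : 1 ≤ n),
      ∫⁻ U : Matrix.unitaryGroup (Fin n) ℂ,
        (⨆ zz : ↥K × ↥K', ENNReal.ofReal
          (‖Matrix.det ((1 : Matrix (Fin n) (Fin n) ℂ) -
                Complex.exp (2 * Real.pi * Complex.I * (zz.2 : ℂ) / n) •
                  star (U : Matrix (Fin n) (Fin n) ℂ)) /
              Matrix.det ((1 : Matrix (Fin n) (Fin n) ℂ) -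
                Complex.exp (2 * Real.pi * Complex.I * (zz.1 : ℂ) / n) •
                  star (U : Matrix (Fin n) (Fin n) ℂ))‖ ^ p)) ∂(μ n)) < ⊤ := by
  obtain ⟨M, hM⟩ := (hK.union hK').exists_norm_le
  have hnorm (z : ℂ) (hz : z ∈ K ∪ K') : ‖2 * Real.pi * Complex.I * z‖ ≤ 2 * Real.pi * M := by
    simpa [abs_of_pos Real.pi_pos, mul_assoc] using
      mul_le_mul_of_nonneg_left (hM z hz) Real.two_pi_pos.le
  have hre (z : ℂ) (hz : z ∈ K) : 2 * Real.pi * δ ≤ |(2 * Real.pi * Complex.I * z).re| := by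
    simpa [abs_mul, abs_of_pos Real.pi_pos, mul_assoc] using
      mul_le_mul_of_nonneg_left (hKδ z hz) Real.two_pi_pos.le
  obtain ⟨C, hC⟩ := HaarRatio.exists_forall_norm_det_div_det_le_exp (2 * Real.pi * M)
    (mul_pos Real.two_pi_pos hδ)
  refine (iSup₂_le fun n hn ↦ (lintegral_mono fun U ↦ iSup_le fun zz ↦
    ENNReal.ofReal_le_ofReal ?_).trans <|
      HaarRatio.lintegral_exp_mul_one_add_norm_resolventTrace_le hn (μ n) (C * p)).trans_lt
    ENNReal.ofReal_lt_top
  rw [mul_right_comm C, Real.exp_mul]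
  exact Real.rpow_le_rpow (norm_nonneg _) (hC hn (star U).2 (hnorm _ (.inl zz.1.2))
    (hnorm _ (.inr zz.2.2)) (hre _ zz.1.2)) hp

/-- Uniform boundedness, over the dimension `n ≥ 1`, of the `p`-th moment of the supremum over
`(z, z′) ∈ K × K` (with `K` compact and disjoint from `ℝ`) of
`|ξ_n(z′)/ξ_n(z)|^p = |det(I − U* e^{2πiz′/n}) / det(I − U* e^{2πiz/n})|^p` under the Haar
probability measure on `U(n)`. -/
theorem stmt_11 (p : ℝ) (hp : 0 < p) (K : Set ℂ) (hK : IsCompact K)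
    (hKR : ∀ z ∈ K, z.im ≠ 0)
    (μ : (n : ℕ) → Measure (Matrix.unitaryGroup (Fin n) ℂ))
    (hprob : ∀ n, IsProbabilityMeasure (μ n))
    (hinv : ∀ n, ∀ g : Matrix.unitaryGroup (Fin n) ℂ,
      Measure.map (fun U : Matrix.unitaryGroup (Fin n) ℂ => g * U) (μ n) = μ n) :
    (⨆ (n : ℕ) (_ : 1 ≤ n),
      ∫⁻ U : Matrix.unitaryGroup (Fin n) ℂ,
        (⨆ zz : ↥K × ↥K, ENNReal.ofReal
          (‖Matrix.det ((1 : Matrix (Fin n) (Fin n) ℂ) -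
                Complex.exp (2 * Real.pi * Complex.I * (zz.2 : ℂ) / n) •
                  star (U : Matrix (Fin n) (Fin n) ℂ)) /
              Matrix.det ((1 : Matrix (Fin n) (Fin n) ℂ) -
                Complex.exp (2 * Real.pi * Complex.I * (zz.1 : ℂ) / n) •
                  star (U : Matrix (Fin n) (Fin n) ℂ))‖ ^ p)) ∂(μ n)) < ⊤ := by
  obtain ⟨δ, hδ, hKδ⟩ := HaarRatio.exists_pos_forall_le_abs_im hK hKR
  have hleft (n : ℕ) : (μ n).IsMulLeftInvariant := ⟨hinv n⟩
  exact stmt_11_general hp.le hK.isBounded hK.isBounded hδ hKδ μ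
end

section
/- Define S : ℝ → ℝ by S(v) = sin(πv)/(πv) for v ≠ 0 and S(0) = 1. Then for every w ∈ ℂ with Im w ≠ 0, the function v ↦ S(v)²/(w − v) is absolutely integrable on ℝ and ∫_ℝ S(v)²/(w − v) dv = sgn(Im w)·(1 − e^{2πi·w·sgn(Im w)})/(2πi·w²) + 1/w. -/
open MeasureTheory

/-- The sine kernel function `S(v) = sin(πv)/(πv)`, with `S(0) = 1`. -/
noncomputable def sineKernel (v : ℝ) : ℝ :=
  if v = 0 then 1 else Real.sin (Real.pi * v) / (Real.pi * v)

/-!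
Taking Fourier transforms turns the Cauchy kernel into a one-sided exponential: for `Im w > 0`,
`v ↦ 1 / (w - v)` is `-2πi` times the Fourier transform of `t ↦ 1_{t > 0} e^{2πiwt}`. Since the
Fourier transform is self-adjoint, `∫ f(v) / (w - v) dv = -2πi ∫_{t > 0} e^{2πiwt} 𝓕f(t) dt` for
every integrable `f`. The square of the sine kernel is the Fourier transform of the triangle
function `max(0, 1 - |t|)`, so by Fourier inversion the right-hand side becomes the elementary
integral `-2πi ∫₀¹ (1 - t) e^{2πiwt} dt`. As the sine kernel is even, both sides of the identity
are odd in `w`, which settles the lower half-plane.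
-/

open Complex Set
open Real (sinc)
open scoped FourierTransform Real

section CauchyTransform

variable {E : Type*} [NormedAddCommGroup E] [NormedSpace ℂ E]

lemma integral_fourier_smul_eq_integral_smul_fourier {V : Type*} [NormedAddCommGroup V]
    [InnerProductSpace ℝ V] [FiniteDimensional ℝ V] [MeasurableSpace V] [BorelSpace V]
    {f : V → ℂ} {g : V → E} (hf : Integrable f) (hg : Integrable g) :
    ∫ ξ, 𝓕 f ξ • g ξ = ∫ x, f x • 𝓕 g x := by
  by_cases hE : CompleteSpace E
  · simpa only [flip_innerₗ] using! VectorFourier.integral_fourierIntegral_smul_eq_flip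
      (L := innerₗ V) Real.continuous_fourierChar continuous_inner hf hg
  · simp [integral, hE]

lemma integrable_inv_sub_smul {μ : Measure ℝ} {f : ℝ → E} (hf : Integrable f μ) {w : ℂ}
    (hw : w.im ≠ 0) : Integrable (fun v : ℝ ↦ (w - v)⁻¹ • f v) μ := by
  refine hf.bdd_smul |w.im|⁻¹ (Measurable.aestronglyMeasurable (by fun_prop))
    (.of_forall fun v ↦ ?_)
  have him : |w.im| ≤ ‖w - v‖ := by simpa using abs_im_le_norm (w - v)
  simpa only [norm_inv] using inv_anti₀ (abs_pos.mpr hw) him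

lemma integral_inv_neg_sub_smul (f : ℝ → E) (w : ℂ) :
    ∫ v : ℝ, (-w - v)⁻¹ • f v = -∫ v : ℝ, (w - v)⁻¹ • f (-v) := by
  rw [← integral_neg_eq_self, ← integral_neg]
  congr 1 with v
  have hneg : -w - ((-v : ℝ) : ℂ) = -(w - v) := by push_cast; ring
  rw [hneg, inv_neg, neg_smul]

/-- The one-sided exponential `t ↦ 1_{t > 0} e^{ct}`, whose Fourier transform is a Cauchy kernel
when `Re c < 0`. -/
noncomputable def oneSidedExp (c : ℂ) : ℝ → ℂ :=
  (Ioi 0).indicator fun t : ℝ ↦ exp (c * t)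

lemma integrable_oneSidedExp {c : ℂ} (hc : c.re < 0) : Integrable (oneSidedExp c) :=
  (integrable_indicator_iff measurableSet_Ioi).mpr (integrableOn_exp_mul_complex_Ioi hc 0)

lemma integral_oneSidedExp_smul (c : ℂ) (f : ℝ → E) :
    ∫ t, oneSidedExp c t • f t = ∫ t in Ioi (0 : ℝ), exp (c * t) • f t := by
  simp only [oneSidedExp, ← indicator_smul_left, integral_indicator measurableSet_Ioi]

lemma fourier_oneSidedExp {c : ℂ} (hc : c.re < 0) (v : ℝ) :
    𝓕 (oneSidedExp c) v = (2 * π * I * v - c)⁻¹ := by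
  have hre : (c - 2 * π * I * v).re < 0 := by simpa using hc
  calc 𝓕 (oneSidedExp c) v
    _ = ∫ t : ℝ, oneSidedExp c t • exp (((-2 * π * t * v : ℝ) : ℂ) * I) := by
        simp only [Real.fourier_real_eq_integral_exp_smul, smul_eq_mul, mul_comm]
    _ = ∫ t in Ioi (0 : ℝ), exp ((c - 2 * π * I * v) * t) := by
        rw [integral_oneSidedExp_smul]
        congr 1 with t
        rw [smul_eq_mul, ← exp_add]
        push_cast
        ring_nf
    _ = (2 * π * I * v - c)⁻¹ := by
        rw [integral_exp_mul_complex_Ioi hre, ← neg_sub c, inv_neg]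
        simp [neg_div]

lemma integral_inv_sub_smul_of_im_pos {f : ℝ → E} (hf : Integrable f) {w : ℂ} (hw : 0 < w.im) :
    ∫ v : ℝ, (w - v)⁻¹ • f v
      = -(2 * π * I) • ∫ t in Ioi (0 : ℝ), exp (2 * π * I * w * t) • 𝓕 f t := by
  have hre : (2 * π * I * w).re < 0 := by simpa using mul_pos Real.two_pi_pos hw
  have hkernel (v : ℝ) :
      (w - v)⁻¹ = -(2 * π * I) • 𝓕 (oneSidedExp (2 * π * I * w)) v := by
    have hfactor : 2 * π * I * v - 2 * π * I * w = -(2 * π * I) * (w - v) := by ring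
    rw [fourier_oneSidedExp hre, hfactor, mul_inv, smul_eq_mul,
      mul_inv_cancel_left₀ (neg_ne_zero.mpr two_pi_I_ne_zero)]
  simp only [hkernel, smul_assoc, integral_smul]
  rw [integral_fourier_smul_eq_integral_smul_fourier (integrable_oneSidedExp hre) hf,
    integral_oneSidedExp_smul]

end CauchyTransform

section Triangle

/-- The triangle function `max(0, 1 - |t|)`, whose Fourier transform is the square of the
normalized cardinal sine. -/
noncomputable def triangle (t : ℝ) : ℝ := max 0 (1 - |t|)

variable {E : Type*} [NormedAddCommGroup E] [NormedSpace ℝ E]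

lemma continuous_triangle : Continuous triangle := by
  unfold triangle
  fun_prop

lemma even_triangle : triangle.Even := fun t ↦ by simp only [triangle, abs_neg]

lemma triangle_eq_zero {t : ℝ} (ht : 1 ≤ |t|) : triangle t = 0 := by
  simp [triangle, ht]

lemma triangle_of_mem_Ioc {t : ℝ} (ht : t ∈ Ioc 0 1) : triangle t = 1 - t := by
  simp [triangle, abs_of_pos ht.1, ht.2]

lemma hasCompactSupport_triangle : HasCompactSupport triangle :=
  .intro (isCompact_closedBall 0 1) fun t ht ↦
    triangle_eq_zero <| by simpa using (not_le.mp (mt mem_closedBall_zero_iff.mpr ht)).le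

lemma integral_Ioi_triangle_smul (f : ℝ → E) :
    ∫ t in Ioi (0 : ℝ), triangle t • f t = ∫ t in (0 : ℝ)..1, (1 - t) • f t := by
  calc ∫ t in Ioi (0 : ℝ), triangle t • f t
    _ = ∫ t in Ioc (0 : ℝ) 1, triangle t • f t := by
        refine setIntegral_eq_of_subset_of_forall_sdiff_eq_zero measurableSet_Ioi
          Ioc_subset_Ioi_self fun t ⟨ht0, ht1⟩ ↦ ?_
        have ht : 1 < t := by simpa using fun h ↦ ht1 ⟨ht0, h⟩
        rw [triangle_eq_zero (ht.le.trans (le_abs_self t)), zero_smul]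
    _ = ∫ t in Ioc (0 : ℝ) 1, (1 - t) • f t :=
        setIntegral_congr_fun measurableSet_Ioc fun t ht ↦ by
          simp only [triangle_of_mem_Ioc ht]
    _ = ∫ t in (0 : ℝ)..1, (1 - t) • f t := (intervalIntegral.integral_of_le zero_le_one).symm

lemma integral_triangle_smul {f : ℝ → E} (hf : LocallyIntegrable f) :
    ∫ t, triangle t • f t
      = (∫ t in (0 : ℝ)..1, (1 - t) • f t) + ∫ t in (0 : ℝ)..1, (1 - t) • f (-t) := by
  have hint : Integrable fun t ↦ triangle t • f t :=
    hf.integrable_smul_left_of_hasCompactSupport continuous_triangle hasCompactSupport_triangle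
  have hneg : ∫ t in Iic (0 : ℝ), triangle t • f t
      = ∫ t in Ioi (0 : ℝ), triangle t • f (-t) := by
    simpa [even_triangle _] using (integral_comp_neg_Ioi 0 fun t ↦ triangle t • f t).symm
  rw [← intervalIntegral.integral_Iic_add_Ioi hint.integrableOn hint.integrableOn (b := 0), hneg,
    integral_Ioi_triangle_smul, integral_Ioi_triangle_smul, add_comm]

end Triangle

lemma integral_one_sub_smul_exp {c : ℂ} (hc : c ≠ 0) :
    ∫ t in (0 : ℝ)..1, (1 - t) • exp (c * t) = (exp c - 1 - c) / c ^ 2 := by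
  have hderiv (t : ℝ) : HasDerivAt (fun t : ℝ ↦ ((1 - t) / c + 1 / c ^ 2) * exp (c * t))
      ((1 - t) • exp (c * t)) t := by
    have hid : HasDerivAt (fun t : ℝ ↦ (t : ℂ)) 1 t := ofRealCLM.hasDerivAt
    refine ((((hid.const_sub 1).div_const c).add_const (1 / c ^ 2)).mul
      (hid.const_mul c).cexp).congr_deriv ?_
    rw [real_smul]
    push_cast
    field_simp
    ring
  rw [intervalIntegral.integral_eq_sub_of_hasDerivAt (fun t _ ↦ hderiv t)
    (Continuous.intervalIntegrable (by fun_prop) _ _)]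
  simp only [ofReal_one, ofReal_zero, sub_self, sub_zero, zero_div, zero_add, mul_one, mul_zero,
    exp_zero]
  field_simp
  ring

lemma integral_one_sub_smul_exp_add_exp_neg (x : ℝ) :
    (∫ t in (0 : ℝ)..1, (1 - t) • exp (2 * x * I * t))
      + ∫ t in (0 : ℝ)..1, (1 - t) • exp (-(2 * x * I) * t) = (sinc x : ℂ) ^ 2 := by
  rcases eq_or_ne x 0 with rfl | hx
  · have hhalf : ∫ t in (0 : ℝ)..1, ((1 - t : ℝ) : ℂ) = 1 / 2 := by
      rw [intervalIntegral.integral_ofReal, intervalIntegral.integral_sub (by simp) (by simp),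
        integral_id]
      norm_num
    simp only [ofReal_zero, mul_zero, zero_mul, neg_zero, exp_zero, real_smul, mul_one, hhalf,
      Real.sinc_zero, ofReal_one]
    norm_num
  · have hx' : (x : ℂ) ≠ 0 := ofReal_ne_zero.mpr hx
    have hc : 2 * x * I ≠ 0 := by simp [hx]
    have hcos : exp (2 * x * I) + exp (-(2 * x * I)) = 2 * (1 - 2 * sin x ^ 2) := by
      rw [← cos_two_mul_eq_one_sub, two_cos, neg_mul]
    rw [integral_one_sub_smul_exp hc, integral_one_sub_smul_exp (neg_ne_zero.mpr hc), neg_sq,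
      ← add_div, Real.sinc_of_ne_zero hx]
    push_cast
    rw [div_pow, div_eq_div_iff (pow_ne_zero 2 hc) (pow_ne_zero 2 hx'), mul_pow, I_sq]
    linear_combination x ^ 2 * hcos

lemma fourier_triangle : 𝓕 (fun t ↦ (triangle t : ℂ)) = fun v ↦ (sinc (π * v) : ℂ) ^ 2 := by
  ext v
  have hexp (t : ℝ) : exp (((-2 * π * t * v : ℝ) : ℂ) * I) • (triangle t : ℂ)
      = triangle t • exp (-(2 * (π * v : ℝ) * I) * t) := by
    rw [smul_eq_mul, real_smul, mul_comm]
    push_cast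
    ring_nf
  have hneg (t : ℝ) : -(2 * (π * v : ℝ) * I) * (-t : ℝ) = 2 * (π * v : ℝ) * I * t := by
    push_cast
    ring
  have hcont : Continuous fun t : ℝ ↦ exp (-(2 * (π * v : ℝ) * I) * t) := by fun_prop
  rw [Real.fourier_real_eq_integral_exp_smul]
  simp only [hexp]
  rw [integral_triangle_smul hcont.locallyIntegrable, add_comm]
  simp only [hneg, integral_one_sub_smul_exp_add_exp_neg]

lemma sinc_sq_le (x : ℝ) : sinc x ^ 2 ≤ 2 * (1 + x ^ 2)⁻¹ := by
  have hone : sinc x ^ 2 ≤ 1 := (sq_le_one_iff_abs_le_one _).mpr (Real.abs_sinc_le_one x)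
  have hmul : sinc x * x = Real.sin x := by
    rcases eq_or_ne x 0 with rfl | hx
    · simp
    · rw [Real.sinc_of_ne_zero hx, div_mul_cancel₀ _ hx]
  have hsin : sinc x ^ 2 * x ^ 2 ≤ 1 := by
    rw [← mul_pow, hmul]
    exact Real.sin_sq_le_one x
  rw [← div_eq_mul_inv, le_div_iff₀ (by positivity)]
  linarith

lemma integrable_sinc_sq : Integrable fun x ↦ sinc x ^ 2 :=
  (integrable_inv_one_add_sq.const_mul 2).mono' (by fun_prop) <| .of_forall fun x ↦ by
    simpa using sinc_sq_le x

lemma integrable_ofReal_sinc_pi_mul_sq : Integrable fun v : ℝ ↦ (sinc (π * v) : ℂ) ^ 2 := by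
  exact_mod_cast (integrable_sinc_sq.comp_mul_left' Real.pi_ne_zero).ofReal (𝕜 := ℂ)

lemma fourier_sinc_pi_mul_sq :
    𝓕 (fun v : ℝ ↦ (sinc (π * v) : ℂ) ^ 2) = fun t ↦ (triangle t : ℂ) := by
  have hcont : Continuous fun t ↦ (triangle t : ℂ) := continuous_ofReal.comp continuous_triangle
  have hint : Integrable fun t ↦ (triangle t : ℂ) :=
    (continuous_triangle.integrable_of_hasCompactSupport hasCompactSupport_triangle).ofReal
  have hinv := hcont.fourierInv_fourier_eq hint
    (by simpa only [fourier_triangle] using integrable_ofReal_sinc_pi_mul_sq)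
  rw [fourier_triangle, Real.fourierInv_eq_fourier_comp_neg] at hinv
  simpa using hinv

lemma integral_inv_sub_smul_sinc_sq_of_im_pos {w : ℂ} (hw : 0 < w.im) :
    ∫ v : ℝ, (w - v)⁻¹ • (sinc (π * v) : ℂ) ^ 2
      = (1 - exp (2 * π * I * w)) / (2 * π * I * w ^ 2) + 1 / w := by
  have hc : 2 * π * I * w ≠ 0 := by
    have hw0 : w ≠ 0 := by
      rintro rfl
      simp at hw
    simp [hw0, Real.pi_ne_zero]
  calc ∫ v : ℝ, (w - v)⁻¹ • (sinc (π * v) : ℂ) ^ 2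
    _ = -(2 * π * I) • ∫ t in Ioi (0 : ℝ), triangle t • exp (2 * π * I * w * t) := by
        rw [integral_inv_sub_smul_of_im_pos integrable_ofReal_sinc_pi_mul_sq hw,
          fourier_sinc_pi_mul_sq]
        simp only [smul_eq_mul, real_smul, mul_comm (triangle _ : ℂ)]
    _ = -(2 * π * I) * ((exp (2 * π * I * w) - 1 - 2 * π * I * w) / (2 * π * I * w) ^ 2) := by
        rw [integral_Ioi_triangle_smul, integral_one_sub_smul_exp hc, smul_eq_mul]
    _ = (1 - exp (2 * π * I * w)) / (2 * π * I * w ^ 2) + 1 / w := by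
        field_simp
        ring

lemma sineKernel_eq_sinc (v : ℝ) : sineKernel v = sinc (π * v) := by
  simp [sineKernel, Real.sinc_apply, Real.pi_ne_zero]

/-- For `w ∈ ℂ` with `Im w ≠ 0`, the function `v ↦ S(v)²/(w−v)` is absolutely integrable on `ℝ`
and `∫_ℝ S(v)²/(w−v) dv = sgn(Im w)(1 − e^{2πiw·sgn(Im w)})/(2πiw²) + 1/w`. -/
theorem stmt_13 (w : ℂ) (hw : w.im ≠ 0) :
    Integrable (fun v : ℝ => ((sineKernel v : ℂ)) ^ 2 / (w - v)) ∧
    ∫ v : ℝ, ((sineKernel v : ℂ)) ^ 2 / (w - v)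
      = (Real.sign w.im : ℂ) *
          (1 - Complex.exp (2 * Real.pi * Complex.I * w * (Real.sign w.im : ℂ))) /
          (2 * Real.pi * Complex.I * w ^ 2) + 1 / w := by
  simp only [sineKernel_eq_sinc, div_eq_inv_mul _ (w - _), ← smul_eq_mul (w - _)⁻¹]
  refine ⟨integrable_inv_sub_smul integrable_ofReal_sinc_pi_mul_sq hw, ?_⟩
  rcases hw.lt_or_gt with hneg | hpos
  · have hodd := integral_inv_neg_sub_smul (fun v : ℝ ↦ (sinc (π * v) : ℂ) ^ 2) (-w)
    simp only [neg_neg, mul_neg, Real.sinc_neg] at hodd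
    rw [hodd, integral_inv_sub_smul_sinc_sq_of_im_pos (by simpa using hneg), Real.sign_of_neg hneg]
    push_cast
    rw [neg_sq, mul_neg, mul_neg_one, div_neg]
    ring
  · rw [integral_inv_sub_smul_sinc_sq_of_im_pos hpos, Real.sign_of_pos hpos]
    simp
end
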